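/- Let n ≥ 2, let 𝒪 ⊂ ℝⁿ be a nonempty open set, let N ≥ 1, T > 0, and let 0 < α_1 < α_2 < … < α_N be real numbers, none of which is a positive integer, such that α_k − α_j is not an integer whenever j ≠ k. Write α_k = m_k + s_k with m_k ∈ ℕ∪{0} the integer part and s_k ∈ (0,1), and define 𝓗^{α_k} u := 𝓗^{s_k}((∂_t − Δ)^{m_k} u). Suppose u_1, …, u_N ∈ C^∞((−∞,T); 𝒮(ℝⁿ)) satisfy: there exist δ > 0 and, for each multi-index β ∈ (ℕ∪{0})^{n+1}, a constant C_β > 0 and a Schwartz function φ_β ∈ 𝒮(ℝⁿ) such that |D^β_{x,t} u_k(x,t)| ≤ C_β |φ_β(x)| e^{δt} for all (x,t) ∈ ℝⁿ × (−∞,−T], all β, and all k. If u_1 = … = u_N = 0 on 𝒪 × (−T,T) and Σ_{k=1}^N b_k 𝓗^{α_k} u_k = 0 on 𝒪 × (−T,T) for some nonzero complex constants b_1,…,b_N, then u_k = 0 on ℝⁿ × (−T,T) for all k = 1,…,N. -/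

import Mathlib

open MeasureTheory Real Set Complex

noncomputable section

/-- A space-time point `(x, t)` with `x : Fin n → ℝ` and `t : ℝ`. -/
abbrev SpaceTime (n : ℕ) := (Fin n → ℝ) × ℝ

/-- Squared Euclidean norm `|x|² = ∑ xᵢ²`. -/
def sqNorm {n : ℕ} (x : Fin n → ℝ) : ℝ := ∑ i, x i ^ 2

/-- The Euclidean heat kernel `G_τ(x) = (4πτ)^{-n/2} exp(-|x|²/(4τ))`. -/
def heatKernel (n : ℕ) (τ : ℝ) (x : Fin n → ℝ) : ℝ :=
  (4 * π * τ) ^ (-(n : ℝ) / 2) * Real.exp (-(sqNorm x) / (4 * τ))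

/-- The parabolic evolution semigroup `(e^{-τ𝓗} u)(x,t) = ∫ G_τ(x-y) u(y, t-τ) dy`. -/
def heatSemigroup (n : ℕ) (τ : ℝ) (u : SpaceTime n → ℂ) (p : SpaceTime n) : ℂ :=
  ∫ y : Fin n → ℝ, (heatKernel n τ (p.1 - y) : ℂ) * u (y, p.2 - τ)

/-- The fractional heat operator
`𝓗^s u(x,t) = (1/Γ(-s)) ∫_0^∞ ((e^{-τ𝓗}u)(x,t) - u(x,t)) τ^{-1-s} dτ`. -/
def fracHeat (n : ℕ) (s : ℝ) (u : SpaceTime n → ℂ) (p : SpaceTime n) : ℂ :=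
  (1 / (Real.Gamma (-s) : ℂ)) *
    ∫ τ in Ioi (0 : ℝ), (heatSemigroup n τ u p - u p) * ((τ ^ (-1 - s) : ℝ) : ℂ)

/-- Partial derivative in the direction `v`. -/
def pderivDir (n : ℕ) (v : SpaceTime n) (u : SpaceTime n → ℂ) : SpaceTime n → ℂ :=
  fun p => fderiv ℝ u p v

/-- The `i`-th spatial coordinate direction. -/
def eSpace (n : ℕ) (i : Fin n) : SpaceTime n := (Pi.single i 1, 0)

/-- The time coordinate direction. -/
def eTime (n : ℕ) : SpaceTime n := (0, 1)

/-- The mixed partial derivative `D^β_{x,t} = ∂_t^{β₀} ∂_{x_1}^{β₁} ⋯ ∂_{x_n}^{β_n}`. -/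
def Dmixed (n : ℕ) (β0 : ℕ) (β : Fin n → ℕ) (u : SpaceTime n → ℂ) : SpaceTime n → ℂ :=
  (pderivDir n (eTime n))^[β0] <|
    (List.finRange n).foldr (fun i w => (pderivDir n (eSpace n i))^[β i] w) u

/-- The heat operator `∂_t - Δ_x`. -/
def heatOp (n : ℕ) (u : SpaceTime n → ℂ) : SpaceTime n → ℂ :=
  fun p => pderivDir n (eTime n) u p -
    ∑ i : Fin n, pderivDir n (eSpace n i) (pderivDir n (eSpace n i) u) p

/-- The space-time Fourier transform `û(ξ,ρ) = ∫ u(x,t) e^{-i(x·ξ + tρ)} dx dt`. -/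
def fourierST (n : ℕ) (u : SpaceTime n → ℂ) (q : SpaceTime n) : ℂ :=
  ∫ p : SpaceTime n, u p * Complex.exp (-Complex.I * (∑ i, p.1 i * q.1 i + p.2 * q.2))

/-- The parabolic symbol `iρ + |ξ|²`. -/
def parSymbol (n : ℕ) (q : SpaceTime n) : ℂ :=
  Complex.I * q.2 + (sqNorm q.1 : ℂ)

/-- `v ∈ C^∞((-∞,T); 𝒮(ℝⁿ))`: smooth on `ℝⁿ × (-∞,T)` and, together with all of its
mixed derivatives, decaying faster than any power of `x`, locally uniformly in `t < T`. -/
def SmoothSchwartzUpTo (n : ℕ) (T : ℝ) (v : SpaceTime n → ℂ) : Prop :=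
  ContDiffOn ℝ (⊤ : ℕ∞) v {p : SpaceTime n | p.2 < T} ∧
  ∀ (β0 : ℕ) (β : Fin n → ℕ) (k : ℕ) (a T' : ℝ), T' < T →
    ∃ C : ℝ, ∀ (x : Fin n → ℝ) (t : ℝ), a ≤ t → t ≤ T' →
      ‖x‖ ^ k * ‖Dmixed n β0 β v (x, t)‖ ≤ C

/-- The fractional poly-parabolic power `𝓗^α := 𝓗^{s}((∂_t - Δ)^{m} ·)`,
where `α = m + s` with `m = ⌊α⌋` the integer part and `s ∈ (0,1)` the fractional part. -/
def fracHeatPoly (n : ℕ) (α : ℝ) (u : SpaceTime n → ℂ) : SpaceTime n → ℂ :=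
  fracHeat n (α - ↑⌊α⌋) ((heatOp n)^[⌊α⌋.toNat] u)

/-!
Near points where `u_k` vanishes, `e^{-τ𝓗} u_k` is `O(e^{-c/τ})` as `τ → 0` and `O(e^{-δτ})` as
`τ → ∞`, so `∫ (e^{-τ𝓗} u_k) τ^{-1-s} dτ` converges for every real `s` and continues `𝓗^s u_k` to
all exponents. Applying `(∂_t - Δ)^j` to the relation therefore gives `∑ b_k 𝓗^{α_k+j} u_k = 0` for
all `j`. Write `F_k(τ) = (e^{-τ𝓗} u_k)(p)`, with Laplace transform `ℒF_k`. Up to Gamma factors, the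
negative moments of `F_k` are the moments of the even function `|v|^{2α_k+1} ℒF_k(v²)`, and the
reflection formula makes these factors cancel in the relations: all moments of a combination of
such functions vanish. It decays exponentially, so it is zero, that is,
`∑ d_k w^{α_k} ℒF_k(w) = 0` for `w > 0` with nonzero `d_k`. As each `ℒF_k` is analytic at `0` and
the `α_k` are distinct modulo `ℤ`, every `ℒF_k` vanishes, hence so does every `F_k`. Finally, the
vanishing of Gaussian averages of `u_k` for all centres near one point forces `u_k = 0`, by
differentiating in the centre and Fourier injectivity.
-/

section WeightedMGF

open Filter Topology

variable {Ω : Type*} [MeasurableSpace Ω] {μ : Measure Ω} {g : Ω → ℂ} {X : Ω → ℝ} {ε : ℝ}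

/-- The moment generating function `z ↦ ∫ g e^{zX} dμ` of `X` under the complex weight `g`; the
analogue of `ProbabilityTheory.complexMGF` for the complex measure `g μ`. -/
def weightedMGF (μ : Measure Ω) (g : Ω → ℂ) (X : Ω → ℝ) (z : ℂ) : ℂ :=
  ∫ ω, g ω * cexp (z * X ω) ∂μ

/-- `X` has an exponential moment of order `ε` under the weight `|g|`, so that `weightedMGF μ g X`
is defined by a convergent integral on the strip `|Re z| ≤ ε`. -/
structure HasExpMoment (μ : Measure Ω) (g : Ω → ℂ) (X : Ω → ℝ) (ε : ℝ) : Prop where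
  aestronglyMeasurable : AEStronglyMeasurable g μ
  aemeasurable : AEMeasurable X μ
  integrable_norm_mul_exp : Integrable (fun ω => ‖g ω‖ * rexp (ε * |X ω|)) μ

lemma norm_cexp_mul_ofReal_le (z : ℂ) (x : ℝ) : ‖cexp (z * x)‖ ≤ rexp (|z.re| * |x|) := by
  rw [Complex.norm_exp, Complex.re_mul_ofReal, ← abs_mul]
  exact Real.exp_le_exp.mpr (le_abs_self _)

lemma abs_le_exp_mul_abs_div {r : ℝ} (hr : 0 < r) (x : ℝ) : |x| ≤ rexp (r * |x|) / r := by
  rw [le_div_iff₀ hr]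
  linarith [Real.add_one_le_exp (r * |x|)]

namespace HasExpMoment

lemma aestronglyMeasurable_mul_cexp (h : HasExpMoment μ g X ε) (z : ℂ) :
    AEStronglyMeasurable (fun ω => g ω * cexp (z * X ω)) μ := by
  have := h.aemeasurable
  exact h.aestronglyMeasurable.mul (AEMeasurable.aestronglyMeasurable (by fun_prop))

lemma integrable_mul_cexp (h : HasExpMoment μ g X ε) {z : ℂ} (hz : |z.re| ≤ ε) :
    Integrable (fun ω => g ω * cexp (z * X ω)) μ := by
  refine h.integrable_norm_mul_exp.mono' (h.aestronglyMeasurable_mul_cexp z)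
    (ae_of_all _ fun ω => ?_)
  rw [norm_mul]
  grw [norm_cexp_mul_ofReal_le, hz]

lemma integrable (h : HasExpMoment μ g X ε) (hε : 0 ≤ ε) : Integrable g μ := by
  simpa using h.integrable_mul_cexp (z := 0) (by simpa using hε)

lemma const_mul (h : HasExpMoment μ g X ε) (d : ℂ) :
    HasExpMoment μ (fun ω => d * g ω) X ε where
  aestronglyMeasurable := h.aestronglyMeasurable.const_mul d
  aemeasurable := h.aemeasurable
  integrable_norm_mul_exp := by
    simpa only [norm_mul, mul_assoc] using h.integrable_norm_mul_exp.const_mul ‖d‖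

lemma sum {ι : Type*} {s : Finset ι} {g : ι → Ω → ℂ} (hX : AEMeasurable X μ)
    (h : ∀ k ∈ s, HasExpMoment μ (g k) X ε) :
    HasExpMoment μ (fun ω => ∑ k ∈ s, g k ω) X ε where
  aestronglyMeasurable := s.aestronglyMeasurable_fun_sum fun k hk => (h k hk).aestronglyMeasurable
  aemeasurable := hX
  integrable_norm_mul_exp := by
    have hmeas : AEStronglyMeasurable (fun ω => ∑ k ∈ s, g k ω) μ :=
      s.aestronglyMeasurable_fun_sum fun k hk => (h k hk).aestronglyMeasurable
    refine (integrable_finsetSum s fun k hk => (h k hk).integrable_norm_mul_exp).mono'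
      (hmeas.norm.mul (AEMeasurable.aestronglyMeasurable (by fun_prop))) (ae_of_all _ fun ω => ?_)
    rw [Real.norm_of_nonneg (by positivity), ← Finset.sum_mul]
    gcongr
    exact norm_sum_le _ _

lemma differentiableAt_weightedMGF (h : HasExpMoment μ g X ε) {z₀ : ℂ} (hz₀ : |z₀.re| < ε) :
    DifferentiableAt ℂ (weightedMGF μ g X) z₀ := by
  set r := (ε - |z₀.re|) / 2 with hr
  have hr₀ : 0 < r := by rw [hr]; linarith
  have hball : ∀ z ∈ Metric.ball z₀ r, |z.re| ≤ |z₀.re| + r := fun z hz => by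
    have h₁ : |z.re - z₀.re| ≤ ‖z - z₀‖ := by
      rw [← Complex.sub_re]; exact Complex.abs_re_le_norm _
    have h₂ : ‖z - z₀‖ < r := by rwa [← dist_eq_norm]
    linarith [abs_sub_abs_le_abs_sub z.re z₀.re]
  have hderiv_le : ∀ ω, ∀ z ∈ Metric.ball z₀ r,
      ‖g ω * (cexp (z * X ω) * X ω)‖ ≤ ‖g ω‖ * rexp (ε * |X ω|) / r := fun ω z hz => calc
    _ = ‖g ω‖ * (‖cexp (z * X ω)‖ * |X ω|) := by
      rw [norm_mul, norm_mul, Complex.norm_real, Real.norm_eq_abs]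
    _ ≤ ‖g ω‖ * (rexp ((|z₀.re| + r) * |X ω|) * (rexp (r * |X ω|) / r)) := by
      gcongr
      · exact (norm_cexp_mul_ofReal_le z _).trans (by gcongr; exact hball z hz)
      · exact abs_le_exp_mul_abs_div hr₀ _
    _ = _ := by
      rw [mul_div_assoc', ← Real.exp_add, mul_div_assoc]
      congr 4
      rw [hr]; ring
  have hasDeriv : ∀ ω, ∀ z ∈ Metric.ball z₀ r,
      HasDerivAt (fun z => g ω * cexp (z * X ω)) (g ω * (cexp (z * X ω) * X ω)) z := fun ω z _ => by
    simpa using (((hasDerivAt_id z).mul_const (X ω : ℂ)).cexp).const_mul (g ω)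
  have hmeas : AEStronglyMeasurable (fun ω => g ω * (cexp (z₀ * X ω) * X ω)) μ := by
    have := h.aemeasurable
    exact h.aestronglyMeasurable.mul (AEMeasurable.aestronglyMeasurable (by fun_prop))
  exact (hasDerivAt_integral_of_dominated_loc_of_deriv_le (Metric.ball_mem_nhds z₀ hr₀)
    (Eventually.of_forall h.aestronglyMeasurable_mul_cexp) (h.integrable_mul_cexp hz₀.le) hmeas
    (ae_of_all _ hderiv_le) (h.integrable_norm_mul_exp.div_const r)
    (ae_of_all _ hasDeriv)).2.differentiableAt

lemma analyticOnNhd_weightedMGF (h : HasExpMoment μ g X ε) :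
    AnalyticOnNhd ℂ (weightedMGF μ g X) {z | |z.re| < ε} :=
  DifferentiableOn.analyticOnNhd
    (fun _ hz => (h.differentiableAt_weightedMGF hz).differentiableWithinAt)
    (isOpen_lt (by fun_prop) continuous_const)

lemma weightedMGF_eq_zero_of_frequently (h : HasExpMoment μ g X ε)
    (hf : ∃ᶠ z in 𝓝[≠] 0, weightedMGF μ g X z = 0) {z : ℂ} (hz : |z.re| < ε) :
    weightedMGF μ g X z = 0 := by
  have hstrip : {z : ℂ | |z.re| < ε} = Complex.reLm ⁻¹' Ioo (-ε) ε := by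
    ext; simp [abs_lt]
  refine h.analyticOnNhd_weightedMGF.eqOn_zero_of_preconnected_of_frequently_eq_zero ?_
    (z₀ := 0) ?_ hf hz
  · rw [hstrip]
    exact ((convex_Ioo (-ε) ε).linear_preimage Complex.reLm).isPreconnected
  · simpa using (abs_nonneg _).trans_lt hz

lemma weightedMGF_eq_zero_of_forall_moment (h : HasExpMoment μ g X ε)
    (hmoment : ∀ j : ℕ, ∫ ω, g ω * (X ω : ℂ) ^ j ∂μ = 0) {z : ℂ} (hz : ‖z‖ < ε) :
    weightedMGF μ g X z = 0 := by
  have hsum_exp (x : ℝ) : HasSum (fun j : ℕ => x ^ j / (j.factorial : ℝ)) (rexp x) := by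
    rw [Real.exp_eq_exp_ℝ]; exact NormedSpace.expSeries_div_hasSum_exp x
  have hsum_cexp (x : ℂ) : HasSum (fun j : ℕ => x ^ j / (j.factorial : ℂ)) (cexp x) := by
    rw [Complex.exp_eq_exp_ℂ]; exact NormedSpace.expSeries_div_hasSum_exp x
  have hseries : HasSum (fun j : ℕ => ∫ ω, g ω * ((z * X ω) ^ j / (j.factorial : ℂ)) ∂μ)
      (weightedMGF μ g X z) := by
    refine hasSum_integral_of_dominated_convergence
      (bound := fun j ω => ‖g ω‖ * ((ε * |X ω|) ^ j / (j.factorial : ℝ)))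
      (fun j => ?_) (fun j => ae_of_all _ fun ω => ?_)
      (ae_of_all _ fun ω => (hsum_exp _).summable.mul_left _) ?_
      (ae_of_all _ fun ω => (hsum_cexp _).mul_left _)
    · have := h.aemeasurable
      exact h.aestronglyMeasurable.mul (AEMeasurable.aestronglyMeasurable (by fun_prop))
    · rw [norm_mul, norm_div, norm_pow, norm_mul, Complex.norm_real, Real.norm_eq_abs,
        Complex.norm_natCast]
      gcongr
    · exact h.integrable_norm_mul_exp.congr
        (ae_of_all _ fun ω => ((hsum_exp _).mul_left _).tsum_eq.symm)
  have hterm (j : ℕ) : ∫ ω, g ω * ((z * X ω) ^ j / (j.factorial : ℂ)) ∂μ = 0 := calc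
    _ = ∫ ω, z ^ j / (j.factorial : ℂ) * (g ω * (X ω : ℂ) ^ j) ∂μ := by
      congr 1; ext ω; ring
    _ = 0 := by rw [integral_const_mul, hmoment, mul_zero]
  exact hseries.unique (by simpa only [hterm] using hasSum_zero)

end HasExpMoment

lemma tendsto_ofReal_nhdsGT_nhdsNE_zero : Tendsto ((↑) : ℝ → ℂ) (𝓝[>] 0) (𝓝[≠] 0) :=
  Complex.continuous_ofReal.continuousWithinAt.tendsto_nhdsWithin fun r hr => by
    simpa using ne_of_gt hr

end WeightedMGF

section Injectivity

open Filter Topology FourierTransform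

lemma eq_zero_of_forall_integral_mul_cexp_inner {V : Type*} [NormedAddCommGroup V]
    [InnerProductSpace ℝ V] [FiniteDimensional ℝ V] [MeasurableSpace V] [BorelSpace V] {g : V → ℂ}
    (hg : Integrable g) (h : ∀ w, ∫ v, g v * cexp (I * (inner ℝ v w : ℝ)) = 0) {v : V}
    (hv : ContinuousAt g v) : g v = 0 := by
  have hfourier : 𝓕 g = 0 := by
    ext w
    rw [Real.fourier_eq', Pi.zero_apply, ← h ((-2 * π) • w)]
    congr 1 with x
    rw [smul_eq_mul, mul_comm, inner_smul_right]
    push_cast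
    ring_nf
  rw [← hg.fourierInv_fourier_eq (by simp [hfourier]) hv, hfourier]
  simp [Real.fourierInv_eq']

lemma eq_zero_of_forall_integral_mul_cexp {g : ℝ → ℂ} (hg : Integrable g)
    (h : ∀ t : ℝ, ∫ x, g x * cexp (I * t * x) = 0) {x : ℝ} (hx : ContinuousAt g x) : g x = 0 := by
  refine eq_zero_of_forall_integral_mul_cexp_inner hg (fun t => ?_) hx
  rw [← h t]
  simp [mul_assoc]

lemma eq_zero_of_forall_integral_mul_cexp_dotProduct {ι : Type*} [Fintype ι] {g : (ι → ℝ) → ℂ}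
    (hg : Integrable g) (h : ∀ ξ, ∫ y, g y * cexp (I * (ξ ⬝ᵥ y : ℝ)) = 0) {y : ι → ℝ}
    (hy : ContinuousAt g y) : g y = 0 := by
  have hpres := PiLp.volume_preserving_ofLp ι
  have hemb : MeasurableEmbedding (@WithLp.ofLp 2 (ι → ℝ)) :=
    (MeasurableEquiv.toLp 2 (ι → ℝ)).symm.measurableEmbedding
  refine eq_zero_of_forall_integral_mul_cexp_inner (V := EuclideanSpace ℝ ι)
    (g := fun v => g v.ofLp) (hpres.integrable_comp_of_integrable hg) (fun w => ?_)
    (v := WithLp.toLp 2 y) (ContinuousAt.comp hy (PiLp.continuous_ofLp 2 _).continuousAt)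
  rw [← h w.ofLp, ← hpres.integral_comp hemb]
  rfl

lemma eq_zero_of_forall_moment {g : ℝ → ℂ} {ε : ℝ} (hε : 0 < ε)
    (hg : HasExpMoment volume g (fun x => x) ε) (hmoment : ∀ j : ℕ, ∫ x, g x * (x : ℂ) ^ j = 0)
    {x : ℝ} (hx : ContinuousAt g x) : g x = 0 := by
  have hzero : ∀ᶠ z in 𝓝[≠] (0 : ℂ), weightedMGF volume g (fun x => x) z = 0 := by
    filter_upwards [nhdsWithin_le_nhds (Metric.ball_mem_nhds 0 hε)] with z hz
    exact hg.weightedMGF_eq_zero_of_forall_moment hmoment (by simpa using hz)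
  exact eq_zero_of_forall_integral_mul_cexp (hg.integrable hε.le) (fun t =>
    hg.weightedMGF_eq_zero_of_frequently hzero.frequently (by simpa using hε)) hx

end Injectivity

section NegMoment

open Filter Topology

variable {c δ C : ℝ} {F : ℝ → ℂ}

/-- `F` is continuous on `(0, ∞)`, flat at `0` like `e^{-c/τ}`, and decays at infinity like
`e^{-δτ}`; the constants are kept explicit so that the bound can be used uniformly in a
parameter. -/
structure FlatExpDecay (c δ C : ℝ) (F : ℝ → ℂ) : Prop where
  c_pos : 0 < c
  δ_pos : 0 < δ
  continuousOn : ContinuousOn F (Ioi 0)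
  norm_le : ∀ τ, 0 < τ → ‖F τ‖ ≤ C * (rexp (-c / τ) * rexp (-(δ * τ)))

/-- The moment `∫_0^∞ F(τ) τ^{-1-s} dτ` of negative order, that is, the Mellin transform of `F`
at `-s`. -/
def negMoment (F : ℝ → ℂ) (s : ℝ) : ℂ :=
  ∫ τ in Ioi (0 : ℝ), F τ * ((τ ^ (-1 - s) : ℝ) : ℂ)

lemma exists_exp_neg_div_mul_rpow_le (hc : 0 < c) (a : ℝ) :
    ∃ K b : ℝ, 1 ≤ b ∧ ∀ τ, 0 < τ → rexp (-c / τ) * τ ^ a ≤ K * τ ^ b := by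
  obtain ⟨N, hN⟩ := exists_nat_ge (1 - a)
  refine ⟨N.factorial / c ^ N, N + a, by linarith, fun τ hτ => ?_⟩
  have hexp : rexp (-c / τ) ≤ N.factorial / c ^ N * τ ^ N := by
    rw [neg_div, Real.exp_neg, inv_le_comm₀ (Real.exp_pos _) (by positivity)]
    refine le_trans (le_of_eq ?_) (Real.pow_div_factorial_le_exp (x := c / τ) (by positivity) N)
    rw [div_pow]
    field_simp
  grw [hexp, mul_assoc, Real.rpow_add hτ, Real.rpow_natCast]

lemma continuousOn_rpow_Ioi (a : ℝ) : ContinuousOn (fun τ : ℝ => τ ^ a) (Ioi 0) := fun _ hτ =>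
  (Real.continuousAt_rpow_const _ _ (Or.inl (ne_of_gt hτ))).continuousWithinAt

lemma integrableOn_exp_neg_div_mul_exp_mul_rpow (hc : 0 < c) (hδ : 0 < δ) (a : ℝ) :
    IntegrableOn (fun τ : ℝ => rexp (-c / τ) * rexp (-(δ * τ)) * τ ^ a) (Ioi 0) := by
  obtain ⟨K, b, hb, hle⟩ := exists_exp_neg_div_mul_rpow_le hc a
  refine ((integrableOn_rpow_mul_exp_neg_mul_rpow (p := 1) (s := b) (b := δ) (by linarith)
    one_pos hδ).const_mul K).mono' ?_ ?_
  · have hdiv : ContinuousOn (fun τ : ℝ => rexp (-c / τ)) (Ioi 0) :=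
      (continuousOn_const.div continuousOn_id fun _ hτ => ne_of_gt hτ).rexp
    exact ((hdiv.mul (by fun_prop)).mul (continuousOn_rpow_Ioi a)).aestronglyMeasurable
      measurableSet_Ioi
  · filter_upwards [ae_restrict_mem measurableSet_Ioi] with τ (hτ : 0 < τ)
    rw [Real.norm_of_nonneg (by positivity), Real.rpow_one]
    calc _ = rexp (-c / τ) * τ ^ a * rexp (-(δ * τ)) := by ring
      _ ≤ K * τ ^ b * rexp (-(δ * τ)) := by gcongr ?_ * _; exact hle τ hτ
      _ = _ := by rw [neg_mul]; ring

namespace FlatExpDecay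

lemma nonneg (h : FlatExpDecay c δ C F) : 0 ≤ C :=
  nonneg_of_mul_nonneg_left ((norm_nonneg _).trans (h.norm_le 1 one_pos)) (by positivity)

lemma aestronglyMeasurable (h : FlatExpDecay c δ C F) :
    AEStronglyMeasurable F (volume.restrict (Ioi 0)) :=
  h.continuousOn.aestronglyMeasurable measurableSet_Ioi

lemma aestronglyMeasurable_mul_rpow (h : FlatExpDecay c δ C F) (a : ℝ) :
    AEStronglyMeasurable (fun τ => F τ * ((τ ^ a : ℝ) : ℂ)) (volume.restrict (Ioi 0)) :=
  (h.continuousOn.mul (Complex.continuous_ofReal.comp_continuousOn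
    (continuousOn_rpow_Ioi a))).aestronglyMeasurable measurableSet_Ioi

lemma norm_mul_rpow_le (h : FlatExpDecay c δ C F) (a : ℝ) {τ : ℝ} (hτ : 0 < τ) :
    ‖F τ * ((τ ^ a : ℝ) : ℂ)‖ ≤ C * (rexp (-c / τ) * rexp (-(δ * τ)) * τ ^ a) := by
  rw [norm_mul, Complex.norm_real, Real.norm_of_nonneg (by positivity), ← mul_assoc]
  gcongr
  exact h.norm_le τ hτ

lemma integrableOn_mul_rpow (h : FlatExpDecay c δ C F) (a : ℝ) :
    IntegrableOn (fun τ => F τ * ((τ ^ a : ℝ) : ℂ)) (Ioi 0) := by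
  refine ((integrableOn_exp_neg_div_mul_exp_mul_rpow h.c_pos h.δ_pos a).const_mul C).mono'
    (h.aestronglyMeasurable_mul_rpow a) ?_
  filter_upwards [ae_restrict_mem measurableSet_Ioi] with τ hτ
  exact h.norm_mul_rpow_le a hτ

lemma exists_norm_mul_rpow_le (h : FlatExpDecay c δ C F) (a : ℝ) :
    ∃ K b : ℝ, 1 ≤ b ∧
      ∀ τ, 0 < τ → ‖F τ * ((τ ^ a : ℝ) : ℂ)‖ ≤ K * (τ ^ b * rexp (-(δ * τ))) := by
  obtain ⟨K, b, hb, hle⟩ := exists_exp_neg_div_mul_rpow_le h.c_pos a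
  refine ⟨C * K, b, hb, fun τ hτ => (h.norm_mul_rpow_le a hτ).trans ?_⟩
  have := h.nonneg
  calc C * (rexp (-c / τ) * rexp (-(δ * τ)) * τ ^ a)
      = C * (rexp (-c / τ) * τ ^ a) * rexp (-(δ * τ)) := by ring
    _ ≤ C * (K * τ ^ b) * rexp (-(δ * τ)) := by gcongr C * ?_ * _; exact hle τ hτ
    _ = _ := by ring

lemma tendsto_mul_rpow_nhdsGT_zero (h : FlatExpDecay c δ C F) (a : ℝ) :
    Tendsto (fun τ => F τ * ((τ ^ a : ℝ) : ℂ)) (𝓝[>] 0) (𝓝 0) := by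
  obtain ⟨K, b, hb, hle⟩ := h.exists_norm_mul_rpow_le a
  have hrpow : ContinuousAt (fun τ : ℝ => τ ^ b) 0 :=
    Real.continuousAt_rpow_const _ _ (Or.inr (by linarith))
  have hlim : Tendsto (fun τ : ℝ => K * (τ ^ b * rexp (-(δ * τ)))) (𝓝 0) (𝓝 0) := by
    simpa [Real.zero_rpow (by linarith : b ≠ 0)] using
      ((hrpow.mul (by fun_prop : ContinuousAt (fun τ => rexp (-(δ * τ))) 0)).tendsto).const_mul K
  refine squeeze_zero_norm' ?_ (hlim.mono_left nhdsWithin_le_nhds)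
  filter_upwards [self_mem_nhdsWithin] with τ hτ using hle τ hτ

lemma tendsto_mul_rpow_atTop (h : FlatExpDecay c δ C F) (a : ℝ) :
    Tendsto (fun τ => F τ * ((τ ^ a : ℝ) : ℂ)) atTop (𝓝 0) := by
  obtain ⟨K, b, -, hle⟩ := h.exists_norm_mul_rpow_le a
  refine squeeze_zero_norm' ?_ (by
    simpa using (tendsto_rpow_mul_exp_neg_mul_atTop_nhds_zero b δ h.δ_pos).const_mul K)
  filter_upwards [eventually_gt_atTop 0] with τ hτ using hle τ hτ

lemma negMoment_of_hasDerivAt {c' δ' C' : ℝ} {F' : ℝ → ℂ} (h : FlatExpDecay c δ C F)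
    (h' : FlatExpDecay c' δ' C' F') (hderiv : ∀ τ, 0 < τ → HasDerivAt F (F' τ) τ) (s : ℝ) :
    negMoment F' s = (1 + s) * negMoment F (s + 1) := by
  have hpow : ∀ τ ∈ Ioi (0 : ℝ), HasDerivAt (fun τ : ℝ => ((τ ^ (-1 - s) : ℝ) : ℂ))
      (-(1 + s : ℂ) * ((τ ^ (-1 - (s + 1)) : ℝ) : ℂ)) τ := fun τ hτ => by
    convert (Real.hasDerivAt_rpow_const (p := -1 - s) (Or.inl (ne_of_gt hτ))).ofReal_comp using 1
    rw [sub_sub (-1) s 1]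
    push_cast
    ring
  have hint : ∀ τ, F τ * (-(1 + s : ℂ) * ((τ ^ (-1 - (s + 1)) : ℝ) : ℂ)) =
      -(1 + s : ℂ) * (F τ * ((τ ^ (-1 - (s + 1)) : ℝ) : ℂ)) := fun τ => by ring
  have hparts := integral_Ioi_mul_deriv_eq_deriv_mul hderiv hpow
    (((h.integrableOn_mul_rpow (-1 - (s + 1))).const_mul (-(1 + s : ℂ))).congr
      (ae_of_all _ fun τ => (hint τ).symm))
    (h'.integrableOn_mul_rpow (-1 - s)) (h.tendsto_mul_rpow_nhdsGT_zero _)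
    (h.tendsto_mul_rpow_atTop _)
  simp only [hint, integral_const_mul] at hparts
  unfold negMoment
  linear_combination hparts

end FlatExpDecay

lemma hasDerivAt_negMoment {c' δ' C' : ℝ} {Φ Φ' : ℝ → ℝ → ℂ} {r₀ : ℝ} {S : Set ℝ} (hS : S ∈ 𝓝 r₀)
    (hΦ : ∀ r ∈ S, FlatExpDecay c δ C (Φ r)) (hΦ' : ∀ r ∈ S, FlatExpDecay c' δ' C' (Φ' r))
    (hderiv : ∀ τ, 0 < τ → ∀ r ∈ S, HasDerivAt (fun r => Φ r τ) (Φ' r τ) r) (s : ℝ) :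
    HasDerivAt (fun r => negMoment (Φ r) s) (negMoment (Φ' r₀) s) r₀ := by
  have h₀' := hΦ' r₀ (mem_of_mem_nhds hS)
  refine (hasDerivAt_integral_of_dominated_loc_of_deriv_le
    (F := fun r τ => Φ r τ * ((τ ^ (-1 - s) : ℝ) : ℂ))
    (F' := fun r τ => Φ' r τ * ((τ ^ (-1 - s) : ℝ) : ℂ)) hS
    (eventually_of_mem hS fun r hr => (hΦ r hr).aestronglyMeasurable_mul_rpow _)
    ((hΦ r₀ (mem_of_mem_nhds hS)).integrableOn_mul_rpow _)
    (h₀'.aestronglyMeasurable_mul_rpow _) ?_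
    ((integrableOn_exp_neg_div_mul_exp_mul_rpow h₀'.c_pos h₀'.δ_pos (-1 - s)).const_mul C')
    ?_).2
  · filter_upwards [ae_restrict_mem measurableSet_Ioi] with τ hτ r hr
    exact (hΦ' r hr).norm_mul_rpow_le _ hτ
  · filter_upwards [ae_restrict_mem measurableSet_Ioi] with τ hτ r hr
    exact (hderiv τ hτ r hr).mul_const _

end NegMoment

section Laplace

variable {c δ C : ℝ} {F : ℝ → ℂ}

/-- The Laplace transform `z ↦ ∫_0^∞ F(τ) e^{-zτ} dτ`. -/
def laplace (F : ℝ → ℂ) (z : ℂ) : ℂ :=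
  weightedMGF (volume.restrict (Ioi 0)) F (fun τ => -τ) z

lemma laplace_ofReal (F : ℝ → ℂ) (w : ℝ) :
    laplace F w = ∫ τ in Ioi (0 : ℝ), F τ * ((rexp (-(w * τ)) : ℝ) : ℂ) := by
  simp [laplace, weightedMGF]

lemma FlatExpDecay.hasExpMoment (h : FlatExpDecay c δ C F) {ε : ℝ} (hε : ε < δ) :
    HasExpMoment (volume.restrict (Ioi 0)) F (fun τ => -τ) ε where
  aestronglyMeasurable := h.aestronglyMeasurable
  aemeasurable := by fun_prop
  integrable_norm_mul_exp := by
    have hmeas := h.aestronglyMeasurable.norm.mul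
      (by fun_prop : Continuous fun τ : ℝ => rexp (ε * |-τ|)).aestronglyMeasurable
    refine ((integrableOn_exp_neg_div_mul_exp_mul_rpow h.c_pos (sub_pos.mpr hε) 0).const_mul
      C).mono' hmeas ?_
    filter_upwards [ae_restrict_mem measurableSet_Ioi] with τ (hτ : 0 < τ)
    rw [Real.norm_of_nonneg (by positivity), abs_neg, abs_of_pos hτ]
    grw [h.norm_le τ hτ]
    rw [Real.rpow_zero, mul_one, mul_assoc, mul_assoc, ← Real.exp_add (-(δ * τ))]
    ring_nf
    rfl

lemma exp_neg_div_mul_exp_neg_sq_mul_le (hc : 0 ≤ c) (v : ℝ) {τ : ℝ} (hτ : 0 < τ) :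
    rexp (-c / τ) * rexp (-(v ^ 2 * τ)) ≤ rexp (-(2 * √c * |v|)) := by
  rw [← Real.exp_add]
  refine Real.exp_le_exp.mpr ?_
  have hsq : 0 ≤ (√c - |v| * τ) ^ 2 / τ := by positivity
  have hexpand : (√c - |v| * τ) ^ 2 / τ = c / τ - 2 * √c * |v| + v ^ 2 * τ := by
    rw [sub_sq, mul_pow, Real.sq_sqrt hc, sq_abs]
    field_simp
  rw [neg_div]
  linarith

lemma FlatExpDecay.norm_laplace_sq_le (h : FlatExpDecay c δ C F) (v : ℝ) :
    ‖laplace F ((v ^ 2 : ℝ) : ℂ)‖ ≤ C / δ * rexp (-(2 * √c * |v|)) := by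
  have hexp : ∫ τ in Ioi (0 : ℝ), rexp (-δ * τ) = 1 / δ := by
    simpa using integral_exp_mul_Ioi (neg_lt_zero.mpr h.δ_pos) 0
  rw [laplace_ofReal]
  calc _ ≤ ∫ τ in Ioi (0 : ℝ), C * rexp (-(2 * √c * |v|)) * rexp (-δ * τ) := by
        refine norm_integral_le_of_norm_le
          ((exp_neg_integrableOn_Ioi 0 h.δ_pos).const_mul _) ?_
        filter_upwards [ae_restrict_mem measurableSet_Ioi] with τ (hτ : 0 < τ)
        have := h.nonneg
        rw [norm_mul, Complex.norm_real, Real.norm_of_nonneg (Real.exp_pos _).le]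
        grw [h.norm_le τ hτ, ← exp_neg_div_mul_exp_neg_sq_mul_le h.c_pos.le v hτ]
        exact le_of_eq (by rw [neg_mul]; ring)
    _ = _ := by rw [integral_const_mul, hexp]; ring

lemma FlatExpDecay.continuous_laplace_sq (h : FlatExpDecay c δ C F) :
    Continuous fun v : ℝ => laplace F ((v ^ 2 : ℝ) : ℂ) := by
  simp only [laplace_ofReal]
  refine continuous_of_dominated (bound := fun τ => ‖F τ‖)
    (fun v => h.aestronglyMeasurable.mul (Continuous.aestronglyMeasurable (by fun_prop)))
    (fun v => ?_) ((h.hasExpMoment h.δ_pos).integrable le_rfl).norm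
    (ae_of_all _ fun τ => by fun_prop)
  filter_upwards [ae_restrict_mem measurableSet_Ioi] with τ (hτ : 0 < τ)
  rw [norm_mul, Complex.norm_real, Real.norm_of_nonneg (Real.exp_pos _).le]
  exact mul_le_of_le_one_right (norm_nonneg _)
    (Real.exp_le_one_iff.mpr (neg_nonpos.mpr (by positivity)))

/-- The even function `v ↦ |v|^{2a+1} (ℒF)(v²)` on `ℝ`, whose moments are negative moments
of `F`. -/
def laplaceProfile (F : ℝ → ℂ) (a v : ℝ) : ℂ :=
  ((|v| ^ (2 * a + 1) : ℝ) : ℂ) * laplace F ((v ^ 2 : ℝ) : ℂ)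

variable {a : ℝ}

lemma laplaceProfile_neg (F : ℝ → ℂ) (a v : ℝ) :
    laplaceProfile F a (-v) = laplaceProfile F a v := by
  simp [laplaceProfile]

lemma laplaceProfile_mul_pow_two_mul (F : ℝ → ℂ) (ha : 0 ≤ a) (i : ℕ) (v : ℝ) :
    laplaceProfile F a v * (v : ℂ) ^ (2 * i) = laplaceProfile F (a + i) v := by
  have hpow : |v| ^ (2 * (a + i) + 1) = |v| ^ (2 * a + 1) * v ^ (2 * i) := by
    rw [show 2 * (a + i) + 1 = 2 * a + 1 + (2 * i : ℕ) by push_cast; ring,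
      Real.rpow_add_of_nonneg (abs_nonneg v) (by positivity) (by positivity),
      Real.rpow_natCast, pow_mul, sq_abs, pow_mul]
  rw [laplaceProfile, laplaceProfile, hpow]
  push_cast
  ring

lemma FlatExpDecay.continuous_laplaceProfile (h : FlatExpDecay c δ C F) (ha : 0 ≤ a) :
    Continuous (laplaceProfile F a) :=
  (Complex.continuous_ofReal.comp (continuous_abs.rpow_const fun _ => Or.inr (by positivity))).mul
    h.continuous_laplace_sq

lemma integrable_abs_rpow_mul_exp_neg_mul_abs_rpow {p b s : ℝ} (hs : -1 < s) (hp : 0 < p)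
    (hb : 0 < b) : Integrable fun v : ℝ => |v| ^ s * rexp (-b * |v| ^ p) := by
  simpa using (integrable_fun_norm_addHaar (E := ℝ) volume
    (f := fun r => r ^ s * rexp (-b * r ^ p))).mpr
    (by simpa using integrableOn_rpow_mul_exp_neg_mul_rpow hs hp hb)

lemma FlatExpDecay.hasExpMoment_laplaceProfile (h : FlatExpDecay c δ C F) (ha : 0 ≤ a) :
    HasExpMoment volume (laplaceProfile F a) (fun v => v) (√c) where
  aestronglyMeasurable := (h.continuous_laplaceProfile ha).aestronglyMeasurable
  aemeasurable := by fun_prop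
  integrable_norm_mul_exp := by
    have hcont := h.continuous_laplaceProfile ha
    have hc := Real.sqrt_pos.mpr h.c_pos
    refine ((integrable_abs_rpow_mul_exp_neg_mul_abs_rpow (s := 2 * a + 1) (by linarith) one_pos
      hc).const_mul (C / δ)).mono' (Continuous.aestronglyMeasurable (by fun_prop))
      (ae_of_all _ fun v => ?_)
    rw [Real.norm_of_nonneg (by positivity), laplaceProfile, norm_mul, Complex.norm_real,
      Real.norm_of_nonneg (by positivity)]
    grw [h.norm_laplace_sq_le v]
    rw [Real.rpow_one, show -(2 * √c * |v|) = -√c * |v| - √c * |v| by ring, Real.exp_sub]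
    refine le_of_eq ?_
    field_simp

lemma integral_abs_rpow_mul_exp_neg_sq_mul (ha : 0 ≤ a) {τ : ℝ} (hτ : 0 < τ) :
    ∫ v : ℝ, |v| ^ (2 * a + 1) * rexp (-(v ^ 2 * τ)) = Real.Gamma (1 + a) * τ ^ (-1 - a) := by
  have hIoi := integral_rpow_mul_exp_neg_mul_rpow (p := 2) (q := 2 * a + 1) (b := τ)
    two_pos (by linarith) hτ
  rw [show (2 * a + 1 + 1) / 2 = 1 + a by ring, show -(2 * a + 1 + 1) / 2 = -1 - a by ring] at hIoi
  calc _ = ∫ v : ℝ, |v| ^ (2 * a + 1) * rexp (-τ * |v| ^ (2 : ℝ)) := by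
        congr 1 with v
        rw [Real.rpow_two, sq_abs]
        ring_nf
    _ = _ := by
        rw [integral_comp_abs (f := fun v => v ^ (2 * a + 1) * rexp (-τ * v ^ (2 : ℝ))), hIoi]
        ring

lemma FlatExpDecay.integrable_abs_rpow_mul_exp_prod (h : FlatExpDecay c δ C F) (ha : 0 ≤ a) :
    Integrable (fun q : ℝ × ℝ => ((|q.1| ^ (2 * a + 1) * rexp (-(q.1 ^ 2 * q.2)) : ℝ) : ℂ) * F q.2)
      (volume.prod (volume.restrict (Ioi 0))) := by
  have hcont : Continuous fun q : ℝ × ℝ =>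
      ((|q.1| ^ (2 * a + 1) * rexp (-(q.1 ^ 2 * q.2)) : ℝ) : ℂ) :=
    Complex.continuous_ofReal.comp (((continuous_abs.comp continuous_fst).rpow_const
      fun _ => Or.inr (by positivity)).mul (by fun_prop))
  have hmeas : AEStronglyMeasurable (fun q : ℝ × ℝ =>
      ((|q.1| ^ (2 * a + 1) * rexp (-(q.1 ^ 2 * q.2)) : ℝ) : ℂ) * F q.2)
      (volume.prod (volume.restrict (Ioi 0))) :=
    hcont.aestronglyMeasurable.mul h.aestronglyMeasurable.comp_snd
  refine (integrable_prod_iff' hmeas).mpr ⟨?_, ?_⟩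
  · filter_upwards [ae_restrict_mem measurableSet_Ioi] with τ (hτ : 0 < τ)
    have hint : Integrable fun v : ℝ => |v| ^ (2 * a + 1) * rexp (-(v ^ 2 * τ)) := by
      simpa only [Real.rpow_two, sq_abs, neg_mul, mul_comm τ] using
        integrable_abs_rpow_mul_exp_neg_mul_abs_rpow (s := 2 * a + 1) (by linarith) two_pos hτ
    exact hint.ofReal.mul_const (F τ)
  · refine ((h.integrableOn_mul_rpow (-1 - a)).norm.const_mul (Real.Gamma (1 + a))).congr ?_
    filter_upwards [ae_restrict_mem measurableSet_Ioi] with τ (hτ : 0 < τ)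
    have hnorm : ∀ v : ℝ, ‖((|v| ^ (2 * a + 1) * rexp (-(v ^ 2 * τ)) : ℝ) : ℂ)‖ =
        |v| ^ (2 * a + 1) * rexp (-(v ^ 2 * τ)) := fun v =>
      Complex.norm_of_nonneg (by positivity)
    simp only [norm_mul, hnorm, integral_mul_const, integral_abs_rpow_mul_exp_neg_sq_mul ha hτ,
      Complex.norm_of_nonneg (Real.rpow_nonneg hτ.le _)]
    ring

lemma FlatExpDecay.integral_laplaceProfile (h : FlatExpDecay c δ C F) (ha : 0 ≤ a) :
    ∫ v, laplaceProfile F a v = Real.Gamma (1 + a) * negMoment F a := by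
  calc _ = ∫ v : ℝ, ∫ τ in Ioi (0 : ℝ),
        ((|v| ^ (2 * a + 1) * rexp (-(v ^ 2 * τ)) : ℝ) : ℂ) * F τ := by
        congr 1 with v
        rw [laplaceProfile, laplace_ofReal, ← integral_const_mul]
        congr 1 with τ
        push_cast
        ring
    _ = ∫ τ in Ioi (0 : ℝ), ∫ v : ℝ,
        ((|v| ^ (2 * a + 1) * rexp (-(v ^ 2 * τ)) : ℝ) : ℂ) * F τ :=
      integral_integral_swap (h.integrable_abs_rpow_mul_exp_prod ha)
    _ = ∫ τ in Ioi (0 : ℝ), Real.Gamma (1 + a) * (F τ * ((τ ^ (-1 - a) : ℝ) : ℂ)) := by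
        refine setIntegral_congr_fun measurableSet_Ioi fun τ hτ => ?_
        simp only [integral_mul_const, integral_complex_ofReal,
          integral_abs_rpow_mul_exp_neg_sq_mul ha hτ]
        push_cast
        ring
    _ = _ := integral_const_mul _ _

lemma FlatExpDecay.integral_laplaceProfile_mul_pow (h : FlatExpDecay c δ C F) (ha : 0 ≤ a)
    (i : ℕ) : ∫ v, laplaceProfile F a v * (v : ℂ) ^ (2 * i) =
      Real.Gamma (1 + (a + i)) * negMoment F (a + i) := by
  simp only [laplaceProfile_mul_pow_two_mul F ha]
  exact h.integral_laplaceProfile (by positivity)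

lemma integral_mul_pow_eq_zero_of_odd {g : ℝ → ℂ} (hg : ∀ v, g (-v) = g v) {j : ℕ} (hj : Odd j) :
    ∫ v, g v * (v : ℂ) ^ j = 0 := by
  have hneg := integral_neg_eq_self (fun v : ℝ => g v * (v : ℂ) ^ j) volume
  simp only [hg, Complex.ofReal_neg, hj.neg_pow, mul_neg, integral_neg] at hneg
  exact self_eq_neg.mp hneg.symm

theorem sum_mul_rpow_mul_laplace_eq_zero {ι : Type*} [Fintype ι] {C : ι → ℝ} {F : ι → ℝ → ℂ}
    {α : ι → ℝ} {d : ι → ℂ} (hF : ∀ k, FlatExpDecay c δ (C k) (F k)) (hα : ∀ k, 0 ≤ α k)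
    (hmoment : ∀ i : ℕ,
      ∑ k, d k * (Real.Gamma (1 + (α k + i)) * negMoment (F k) (α k + i)) = 0)
    {w : ℝ} (hw : 0 < w) : ∑ k, d k * ((w ^ α k : ℝ) * laplace (F k) w) = 0 := by
  set g : ℝ → ℂ := fun v => ∑ k, d k * laplaceProfile (F k) (α k) v with hg
  have hcont : Continuous g :=
    continuous_finsetSum _ fun k _ => ((hF k).continuous_laplaceProfile (hα k)).const_mul _
  have hzero : g √w = 0 := by
    rcases isEmpty_or_nonempty ι with _ | ⟨⟨k₀⟩⟩
    · simp [hg]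
    refine eq_zero_of_forall_moment (Real.sqrt_pos.mpr (hF k₀).c_pos) (HasExpMoment.sum
      (by fun_prop) fun k _ =>
        ((hF k).hasExpMoment_laplaceProfile (hα k)).const_mul (d k))
      (fun j => ?_) hcont.continuousAt
    rcases j.even_or_odd' with ⟨i, rfl | rfl⟩
    · have hint : ∀ k, Integrable fun v => laplaceProfile (F k) (α k) v * (v : ℂ) ^ (2 * i) := by
        intro k
        simp only [laplaceProfile_mul_pow_two_mul _ (hα k)]
        exact ((hF k).hasExpMoment_laplaceProfile (add_nonneg (hα k) i.cast_nonneg)).integrable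
          (Real.sqrt_nonneg c)
      simp only [Finset.sum_mul, mul_assoc]
      rw [integral_finsetSum _ fun k _ => (hint k).const_mul (d k), ← hmoment i]
      exact Finset.sum_congr rfl fun k _ => by
        rw [integral_const_mul, (hF k).integral_laplaceProfile_mul_pow (hα k)]
    · exact integral_mul_pow_eq_zero_of_odd (fun v => by simp only [laplaceProfile_neg])
        (odd_two_mul_add_one i)
  have hsqrt : ∀ k, laplaceProfile (F k) (α k) √w = √w * ((w ^ α k : ℝ) * laplace (F k) w) := by
    intro k
    rw [laplaceProfile, Real.sq_sqrt hw.le, abs_of_nonneg (Real.sqrt_nonneg w),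
      Real.rpow_add_one (Real.sqrt_pos.mpr hw).ne', Real.rpow_mul (Real.sqrt_nonneg w),
      Real.rpow_two, Real.sq_sqrt hw.le]
    push_cast
    ring
  simp only [hg, hsqrt, mul_left_comm (d _) (√w : ℂ), ← Finset.mul_sum] at hzero
  exact (mul_eq_zero.mp hzero).resolve_left (by simpa using (Real.sqrt_pos.mpr hw).ne')

end Laplace

section LeadingExponent

open Filter Topology

/-- Dividing by the lowest power of `w` isolates its coefficient in the limit `w → 0+`. -/
lemma eq_empty_of_eventually_sum_rpow_mul_eq_zero {ι : Type*} {s : Finset ι} {e : ι → ℝ}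
    (he : Set.InjOn e s) {q : ι → ℝ → ℂ} {a : ι → ℂ}
    (hq : ∀ k ∈ s, Tendsto (q k) (𝓝[>] 0) (𝓝 (a k))) (ha : ∀ k ∈ s, a k ≠ 0)
    (hsum : ∀ᶠ w : ℝ in 𝓝[>] 0, ∑ k ∈ s, ((w ^ e k : ℝ) : ℂ) * q k w = 0) : s = ∅ := by
  classical
  by_contra hs
  obtain ⟨k₀, hk₀, hmin⟩ := s.exists_min_image e (Finset.nonempty_iff_ne_empty.mpr hs)
  have hlim : Tendsto (fun w : ℝ => ∑ k ∈ s, ((w ^ (e k - e k₀) : ℝ) : ℂ) * q k w) (𝓝[>] 0)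
      (𝓝 (∑ k ∈ s, if k = k₀ then a k else 0)) := by
    refine tendsto_finsetSum _ fun k hk => ?_
    split_ifs with h
    · simpa [h] using hq k₀ hk₀
    · have hlt : 0 < e k - e k₀ :=
        sub_pos.mpr ((hmin k hk).lt_of_ne fun heq => h (he hk hk₀ heq.symm))
      have hrpow : Tendsto (fun w : ℝ => w ^ (e k - e k₀)) (𝓝[>] 0) (𝓝 0) := by
        simpa [Real.zero_rpow hlt.ne'] using
          ((Real.continuousAt_rpow_const 0 _ (Or.inr hlt.le)).tendsto).mono_left
            nhdsWithin_le_nhds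
      simpa using ((Complex.continuous_ofReal.tendsto 0).comp hrpow).mul (hq k hk)
  have hzero : ∀ᶠ w : ℝ in 𝓝[>] 0, ∑ k ∈ s, ((w ^ (e k - e k₀) : ℝ) : ℂ) * q k w = 0 := by
    filter_upwards [hsum, self_mem_nhdsWithin] with w hw (hw₀ : 0 < w)
    simp only [Real.rpow_sub hw₀, Complex.ofReal_div, div_mul_eq_mul_div, ← Finset.sum_div, hw,
      zero_div]
  have heq := tendsto_nhds_unique (hlim.congr' hzero) tendsto_const_nhds
  rw [Finset.sum_ite_eq' s k₀, if_pos hk₀] at heq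
  exact ha k₀ hk₀ heq

lemma eventually_eq_zero_of_sum_mul_rpow_mul_eq_zero {ι : Type*} [Fintype ι] {α : ι → ℝ}
    {d : ι → ℂ} {g : ι → ℂ → ℂ} (hg : ∀ k, AnalyticAt ℂ (g k) 0) (hd : ∀ k, d k ≠ 0)
    (hα : ∀ j k, j ≠ k → ∀ m : ℤ, α k - α j ≠ m)
    (hsum : ∀ w : ℝ, 0 < w → ∑ k, d k * ((w ^ α k : ℝ) * g k w) = 0) (k : ι) :
    ∀ᶠ z in 𝓝 0, g k z = 0 := by
  classical
  set S : Finset ι := Finset.univ.filter fun k => ¬ ∀ᶠ z in 𝓝 (0 : ℂ), g k z = 0 with hS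
  suffices S = ∅ from not_not.mp (Finset.filter_eq_empty_iff.mp this (Finset.mem_univ k))
  choose! ν q hq_analytic hq_ne hgq using fun k (hk : ¬ ∀ᶠ z in 𝓝 (0 : ℂ), g k z = 0) =>
    (hg k).exists_eventuallyEq_pow_smul_nonzero_iff.mpr hk
  have hof : Tendsto ((↑) : ℝ → ℂ) (𝓝[>] 0) (𝓝 0) :=
    tendsto_ofReal_nhdsGT_nhdsNE_zero.mono_right nhdsWithin_le_nhds
  refine eq_empty_of_eventually_sum_rpow_mul_eq_zero (e := fun k => α k + ν k)
    (q := fun k w => d k * q k w) (a := fun k => d k * q k 0) (fun j _ k _ hjk => ?_)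
    (fun k hk => ?_) (fun k hk => mul_ne_zero (hd k) (hq_ne k (by simpa [hS] using hk))) ?_
  · by_contra hne
    refine hα j k hne (ν j - ν k) ?_
    push_cast
    linarith
  · exact ((hq_analytic k (by simpa [hS] using hk)).continuousAt.tendsto.comp hof).const_mul _
  · have hterm : ∀ᶠ w : ℝ in 𝓝[>] 0, ∀ k,
        g k w = if k ∈ S then (w : ℂ) ^ ν k * q k w else 0 := by
      refine eventually_all.mpr fun k => ?_
      by_cases hk : ∀ᶠ z in 𝓝 (0 : ℂ), g k z = 0
      · filter_upwards [hof.eventually hk] with w hw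
        simpa only [hS, Finset.mem_filter_univ, hk, not_true, if_false] using hw
      · filter_upwards [hof.eventually (hgq k hk)] with w hw
        simpa only [hS, Finset.mem_filter_univ, hk, not_false_eq_true, if_true, sub_zero,
          smul_eq_mul] using hw
    filter_upwards [hterm, self_mem_nhdsWithin] with w hw (hw₀ : 0 < w)
    rw [← hsum w hw₀]
    simp only [hw, mul_ite, mul_zero, Finset.sum_ite_mem, Finset.univ_inter]
    refine Finset.sum_congr rfl fun k _ => ?_
    rw [Real.rpow_add hw₀, Real.rpow_natCast]
    push_cast
    ring

variable {c δ : ℝ}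

lemma FlatExpDecay.eq_zero_of_eventually_laplace_eq_zero {C : ℝ} {F : ℝ → ℂ}
    (h : FlatExpDecay c δ C F) (hzero : ∀ᶠ z in 𝓝 0, laplace F z = 0) {τ : ℝ} (hτ : 0 < τ) :
    F τ = 0 := by
  have hmgf (t : ℝ) := (h.hasExpMoment (half_lt_self h.δ_pos)).weightedMGF_eq_zero_of_frequently
    (hzero.filter_mono nhdsWithin_le_nhds).frequently
    (z := -(I * t)) (by simpa using half_pos h.δ_pos)
  have hcont : ContinuousAt ((Ioi (0 : ℝ)).indicator F) τ := by
    refine (h.continuousOn.continuousAt (Ioi_mem_nhds hτ)).congr ?_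
    filter_upwards [Ioi_mem_nhds hτ] with x hx using (indicator_of_mem hx F).symm
  have hint : Integrable ((Ioi (0 : ℝ)).indicator F) :=
    (integrable_indicator_iff measurableSet_Ioi).mpr ((h.hasExpMoment h.δ_pos).integrable le_rfl)
  rw [← indicator_of_mem (mem_Ioi.mpr hτ) F]
  refine eq_zero_of_forall_integral_mul_cexp hint (fun t => ?_) hcont
  rw [← hmgf t, weightedMGF,
    ← integral_indicator measurableSet_Ioi]
  congr 1 with x
  by_cases hx : x ∈ Ioi 0 <;> simp [hx]

theorem FlatExpDecay.eq_zero_of_forall_sum_negMoment_eq_zero {ι : Type*} [Fintype ι] {C : ι → ℝ}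
    {F : ι → ℝ → ℂ} {α : ι → ℝ} {d : ι → ℂ} (hF : ∀ k, FlatExpDecay c δ (C k) (F k))
    (hα₀ : ∀ k, 0 ≤ α k) (hα : ∀ j k, j ≠ k → ∀ m : ℤ, α k - α j ≠ m) (hd : ∀ k, d k ≠ 0)
    (hmoment : ∀ i : ℕ,
      ∑ k, d k * (Real.Gamma (1 + (α k + i)) * negMoment (F k) (α k + i)) = 0)
    (k : ι) {τ : ℝ} (hτ : 0 < τ) : F k τ = 0 := by
  refine (hF k).eq_zero_of_eventually_laplace_eq_zero
    (eventually_eq_zero_of_sum_mul_rpow_mul_eq_zero (fun j => ?_) hd hα (fun w hw =>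
      sum_mul_rpow_mul_laplace_eq_zero hF hα₀ hmoment hw) k) hτ
  exact ((hF j).hasExpMoment (half_lt_self (hF j).δ_pos)).analyticOnNhd_weightedMGF 0
    (by simpa using half_pos (hF j).δ_pos)

end LeadingExponent

section CoordinateDerivatives

open scoped ContDiff

variable {n : ℕ} {T δ : ℝ} {U : Set (SpaceTime n)} {v w : SpaceTime n → ℂ}

/-- The coordinate directions of space-time: `none` is time and `some i` the `i`-th space
direction. -/
def coordDir : Option (Fin n) → SpaceTime n
  | none => eTime n
  | some i => eSpace n i

/-- The iterated partial derivative along a list of coordinate directions, the head of the list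
being applied last. -/
def iterPDeriv (L : List (Option (Fin n))) (v : SpaceTime n → ℂ) : SpaceTime n → ℂ :=
  L.foldr (fun o w => pderivDir n (coordDir o) w) v

/-- The space-time half space `t < T`. -/
def pastOf (n : ℕ) (T : ℝ) : Set (SpaceTime n) := {p | p.2 < T}

lemma isOpen_pastOf (n : ℕ) (T : ℝ) : IsOpen (pastOf n T) :=
  isOpen_lt continuous_snd continuous_const

lemma pderivDir_eqOn (hU : IsOpen U) (h : EqOn v w U) (e : SpaceTime n) :
    EqOn (pderivDir n e v) (pderivDir n e w) U := fun p hp => by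
  simp only [pderivDir, (Filter.eventuallyEq_of_mem (hU.mem_nhds hp) h).fderiv_eq]

lemma pderivDir_eqOn_zero (hU : IsOpen U) (h : EqOn v 0 U) (e : SpaceTime n) :
    EqOn (pderivDir n e v) 0 U := fun p hp => by
  rw [pderivDir_eqOn hU h e hp]
  simp [pderivDir]

lemma heatOp_eqOn_zero (hU : IsOpen U) (h : EqOn v 0 U) : EqOn (heatOp n v) 0 U := fun p hp => by
  simp only [heatOp, pderivDir_eqOn_zero hU h _ hp,
    pderivDir_eqOn_zero hU (pderivDir_eqOn_zero hU h _) _ hp, Pi.zero_apply,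
    Finset.sum_const_zero, sub_zero]

lemma contDiffOn_pderivDir (hU : IsOpen U) (h : ContDiffOn ℝ ∞ v U) (e : SpaceTime n) :
    ContDiffOn ℝ ∞ (pderivDir n e v) U :=
  (h.fderiv_of_isOpen hU (m := ∞) (by simp)).clm_apply contDiffOn_const

lemma contDiffOn_iterPDeriv (hU : IsOpen U) (h : ContDiffOn ℝ ∞ v U)
    (L : List (Option (Fin n))) : ContDiffOn ℝ ∞ (iterPDeriv L v) U := by
  induction L with
  | nil => exact h
  | cons o L ih => exact contDiffOn_pderivDir hU ih _

lemma pderivDir_comm_eqOn (hU : IsOpen U) (h : ContDiffOn ℝ ∞ v U) (e f : SpaceTime n) :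
    EqOn (pderivDir n e (pderivDir n f v)) (pderivDir n f (pderivDir n e v)) U := by
  intro p hp
  have hdiff : DifferentiableAt ℝ (fderiv ℝ v) p :=
    ((h.fderiv_of_isOpen hU (m := ∞) (by simp)).contDiffAt (hU.mem_nhds hp)).differentiableAt
      (by simp)
  have hsnd : ∀ a b, pderivDir n a (pderivDir n b v) p = fderiv ℝ (fderiv ℝ v) p a b := by
    intro a b
    change fderiv ℝ (fun q => fderiv ℝ v q b) p a = _
    simp [fderiv_clm_apply hdiff (differentiableAt_const b)]
  rw [hsnd, hsnd]
  exact (h.contDiffAt (hU.mem_nhds hp)).isSymmSndFDerivAt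
    (by simpa using WithTop.coe_le_coe.mpr (le_top : (2 : ℕ∞) ≤ ⊤)) e f

lemma iterPDeriv_eqOn_of_perm (hU : IsOpen U) (h : ContDiffOn ℝ ∞ v U)
    {L M : List (Option (Fin n))} (hLM : L.Perm M) :
    EqOn (iterPDeriv L v) (iterPDeriv M v) U := by
  induction hLM with
  | nil => exact fun _ _ => rfl
  | cons o _ ih => exact pderivDir_eqOn hU ih _
  | swap a b l => exact pderivDir_comm_eqOn hU (contDiffOn_iterPDeriv hU h l) _ _
  | trans _ _ ih₁ ih₂ => exact ih₁.trans ih₂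

lemma iterPDeriv_append (L M : List (Option (Fin n))) (v : SpaceTime n → ℂ) :
    iterPDeriv (L ++ M) v = iterPDeriv L (iterPDeriv M v) := by
  simp [iterPDeriv, List.foldr_append]

lemma iterPDeriv_replicate (k : ℕ) (o : Option (Fin n)) (v : SpaceTime n → ℂ) :
    iterPDeriv (List.replicate k o) v = (pderivDir n (coordDir o))^[k] v := by
  induction k with
  | zero => rfl
  | succ k ih => rw [Function.iterate_succ_apply', ← ih]; rfl

lemma Dmixed_eq_iterPDeriv (β₀ : ℕ) (β : Fin n → ℕ) (v : SpaceTime n → ℂ) :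
    Dmixed n β₀ β v = iterPDeriv (List.replicate β₀ none ++
      (List.finRange n).flatMap fun i => List.replicate (β i) (some i)) v := by
  rw [iterPDeriv_append, iterPDeriv_replicate, Dmixed]
  congr 1
  induction List.finRange n with
  | nil => rfl
  | cons i l ih =>
    rw [List.flatMap_cons, iterPDeriv_append, iterPDeriv_replicate, List.foldr_cons, ih]
    rfl

lemma perm_replicate_append_flatMap_replicate (L : List (Option (Fin n))) :
    L.Perm (List.replicate (L.count none) none ++
      (List.finRange n).flatMap fun i => List.replicate (L.count (some i)) (some i)) := by
  refine List.perm_iff_count.mpr fun a => ?_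
  rw [List.count_append, List.count_flatMap]
  cases a with
  | none => simp [List.count_replicate, Function.comp_def]
  | some i =>
    simp only [List.count_replicate, Function.comp_def]
    rw [← List.ofFn_eq_map, List.sum_ofFn]
    simp [Finset.sum_ite_eq']

lemma iterPDeriv_eqOn_Dmixed (hU : IsOpen U) (h : ContDiffOn ℝ ∞ v U)
    (L : List (Option (Fin n))) :
    EqOn (iterPDeriv L v) (Dmixed n (L.count none) (fun i => L.count (some i)) v) U := by
  rw [Dmixed_eq_iterPDeriv]
  exact iterPDeriv_eqOn_of_perm hU h (perm_replicate_append_flatMap_replicate L)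

lemma iterPDeriv_sub_eqOn (hU : IsOpen U) (hv : ContDiffOn ℝ ∞ v U) (hw : ContDiffOn ℝ ∞ w U)
    (L : List (Option (Fin n))) :
    EqOn (iterPDeriv L (v - w)) (iterPDeriv L v - iterPDeriv L w) U := by
  induction L with
  | nil => exact fun _ _ => rfl
  | cons o L ih =>
    intro p hp
    have hdiff {f : SpaceTime n → ℂ} (hf : ContDiffOn ℝ ∞ f U) :
        DifferentiableAt ℝ (iterPDeriv L f) p :=
      ((contDiffOn_iterPDeriv hU hf L).contDiffAt (hU.mem_nhds hp)).differentiableAt (by simp)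
    refine (pderivDir_eqOn hU ih _ hp).trans ?_
    rw [pderivDir, fderiv_sub (hdiff hv) (hdiff hw)]
    rfl

/-- `v` is smooth for `t < T` and each of its derivatives is `O(e^{δt})` for `t ≤ T' < T`,
uniformly in `x`. Unlike the hypotheses of the theorem, this is visibly stable under the heat
operator. -/
structure HasExpDecay (n : ℕ) (T δ : ℝ) (v : SpaceTime n → ℂ) : Prop where
  contDiffOn : ContDiffOn ℝ ∞ v (pastOf n T)
  exists_norm_iterPDeriv_le : ∀ L : List (Option (Fin n)), ∀ T' < T,
    ∃ C : ℝ, ∀ p : SpaceTime n, p.2 ≤ T' → ‖iterPDeriv L v p‖ ≤ C * rexp (δ * p.2)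

namespace HasExpDecay

lemma differentiableAt (h : HasExpDecay n T δ v) {p : SpaceTime n} (hp : p.2 < T) :
    DifferentiableAt ℝ v p :=
  (h.contDiffOn.contDiffAt ((isOpen_pastOf n T).mem_nhds hp)).differentiableAt (by simp)

lemma exists_norm_le (h : HasExpDecay n T δ v) {T' : ℝ} (hT' : T' < T) :
    ∃ C, ∀ p : SpaceTime n, p.2 ≤ T' → ‖v p‖ ≤ C * rexp (δ * p.2) :=
  h.exists_norm_iterPDeriv_le [] T' hT'

lemma of_smoothSchwartzUpTo (hδ : 0 ≤ δ) (hv : SmoothSchwartzUpTo n T v)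
    (hbound : ∀ (β₀ : ℕ) (β : Fin n → ℕ), ∃ C : ℝ, ∀ p : SpaceTime n, p.2 ≤ -T →
      ‖Dmixed n β₀ β v p‖ ≤ C * rexp (δ * p.2)) : HasExpDecay n T δ v := by
  refine ⟨hv.1, fun L T' hT' => ?_⟩
  obtain ⟨C₁, hC₁⟩ := hbound (L.count none) (fun i => L.count (some i))
  obtain ⟨C₂, hC₂⟩ := hv.2 (L.count none) (fun i => L.count (some i)) 0 (-T) T' hT'
  refine ⟨max C₁ (|C₂| * rexp (δ * T)), fun p hp => ?_⟩
  rw [iterPDeriv_eqOn_Dmixed (isOpen_pastOf n T) hv.1 L (hp.trans_lt hT')]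
  rcases le_total p.2 (-T) with hpT | hpT
  · grw [hC₁ p hpT, ← le_max_left]
  · calc _ ≤ |C₂| := by simpa using (hC₂ p.1 p.2 hpT hp).trans (le_abs_self _)
      _ ≤ |C₂| * (rexp (δ * T) * rexp (δ * p.2)) := by
        refine le_mul_of_one_le_right (abs_nonneg _) ?_
        rw [← Real.exp_add, ← mul_add]
        exact Real.one_le_exp (mul_nonneg hδ (by linarith))
      _ ≤ _ := by grw [← mul_assoc, ← le_max_right]

protected lemma pderivDir (h : HasExpDecay n T δ v) (o : Option (Fin n)) :
    HasExpDecay n T δ (pderivDir n (coordDir o) v) where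
  contDiffOn := contDiffOn_pderivDir (isOpen_pastOf n T) h.contDiffOn _
  exists_norm_iterPDeriv_le L T' hT' := by
    have := h.exists_norm_iterPDeriv_le (L ++ [o]) T' hT'
    rwa [iterPDeriv_append] at this

lemma sub (h : HasExpDecay n T δ v) (h' : HasExpDecay n T δ w) : HasExpDecay n T δ (v - w) := by
  refine ⟨h.contDiffOn.sub h'.contDiffOn, fun L T' hT' => ?_⟩
  obtain ⟨C, hC⟩ := h.exists_norm_iterPDeriv_le L T' hT'
  obtain ⟨C', hC'⟩ := h'.exists_norm_iterPDeriv_le L T' hT'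
  refine ⟨C + C', fun p hp => ?_⟩
  rw [iterPDeriv_sub_eqOn (isOpen_pastOf n T) h.contDiffOn h'.contDiffOn L (hp.trans_lt hT'),
    add_mul]
  exact (norm_sub_le _ _).trans (add_le_add (hC p hp) (hC' p hp))

lemma sub_sum {ι : Type*} (h : HasExpDecay n T δ v) (s : Finset ι) {w : ι → SpaceTime n → ℂ}
    (hw : ∀ i ∈ s, HasExpDecay n T δ (w i)) : HasExpDecay n T δ (v - ∑ i ∈ s, w i) := by
  classical
  induction s using Finset.induction_on with
  | empty => simpa using h
  | insert a s ha ih =>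
    rw [Finset.sum_insert ha, add_comm, ← sub_sub]
    exact (ih fun i hi => hw i (Finset.mem_insert_of_mem hi)).sub
      (hw a (Finset.mem_insert_self a s))

protected lemma heatOp (h : HasExpDecay n T δ v) : HasExpDecay n T δ (heatOp n v) := by
  convert (h.pderivDir none).sub_sum Finset.univ
    fun i _ => (h.pderivDir (some i)).pderivDir (some i)
  ext p
  simp [heatOp, coordDir, Finset.sum_apply]

end HasExpDecay

end CoordinateDerivatives

section HeatKernel

variable {n : ℕ}

lemma sqNorm_nonneg (z : Fin n → ℝ) : 0 ≤ sqNorm z := Finset.sum_nonneg fun _ _ => sq_nonneg _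

lemma norm_sq_le_sqNorm (z : Fin n → ℝ) : ‖z‖ ^ 2 ≤ sqNorm z := by
  rw [← Real.le_sqrt (norm_nonneg z) (sqNorm_nonneg z),
    pi_norm_le_iff_of_nonneg (Real.sqrt_nonneg _)]
  exact fun i => Real.abs_le_sqrt
    (Finset.single_le_sum (f := fun i => z i ^ 2) (fun i _ => sq_nonneg _) (Finset.mem_univ i))

lemma sqNorm_smul (r : ℝ) (z : Fin n → ℝ) : sqNorm (r • z) = r ^ 2 * sqNorm z := by
  simp only [sqNorm, Pi.smul_apply, smul_eq_mul, mul_pow, Finset.mul_sum]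

lemma continuous_sqNorm : Continuous (sqNorm : (Fin n → ℝ) → ℝ) := by
  unfold sqNorm
  fun_prop

lemma hasLineDerivAt_sqNorm (z w : Fin n → ℝ) : HasLineDerivAt ℝ sqNorm (2 * (z ⬝ᵥ w)) z w := by
  have hcoord (i : Fin n) : HasDerivAt (fun t : ℝ => (z + t • w) i ^ 2) (2 * (z i * w i)) 0 := by
    simpa [mul_assoc] using (((hasDerivAt_id (0 : ℝ)).mul_const (w i)).const_add (z i)).fun_pow 2
  simpa only [HasLineDerivAt, sqNorm, dotProduct, Finset.mul_sum] using
    HasDerivAt.fun_sum fun i (_ : i ∈ Finset.univ) => hcoord i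

lemma integrable_exp_neg_mul_sqNorm {b : ℝ} (hb : 0 < b) :
    Integrable fun z : Fin n → ℝ => rexp (-b * sqNorm z) := by
  simp only [sqNorm, Finset.mul_sum, Real.exp_sum]
  exact Integrable.fintype_prod (μ := fun _ => (volume : Measure ℝ))
    (f := fun _ x => rexp (-b * x ^ 2)) fun _ => integrable_exp_neg_mul_sq hb

lemma heatKernel_nonneg {τ : ℝ} (hτ : 0 ≤ τ) (z : Fin n → ℝ) : 0 ≤ heatKernel n τ z := by
  unfold heatKernel
  positivity

lemma continuous_heatKernel (n : ℕ) (τ : ℝ) : Continuous (heatKernel n τ) :=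
  continuous_const.mul (Real.continuous_exp.comp (continuous_sqNorm.neg.div_const _))

lemma hasLineDerivAt_heatKernel (τ : ℝ) (z w : Fin n → ℝ) :
    HasLineDerivAt ℝ (heatKernel n τ) (-(z ⬝ᵥ w) / (2 * τ) * heatKernel n τ z) z w := by
  have h : HasDerivAt (fun t : ℝ => sqNorm (z + t • w)) (2 * (z ⬝ᵥ w)) 0 :=
    hasLineDerivAt_sqNorm z w
  refine (((h.neg.div_const (4 * τ)).exp).const_mul _).congr_deriv ?_
  rw [heatKernel, Pi.neg_apply, zero_smul, add_zero]
  ring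

lemma integrable_heatKernel_mul_exp {τ b : ℝ} (hb : b < 1 / (4 * τ)) :
    Integrable fun z : Fin n → ℝ => heatKernel n τ z * rexp (b * sqNorm z) := by
  simp only [heatKernel, mul_assoc, ← Real.exp_add]
  refine (Integrable.congr (integrable_exp_neg_mul_sqNorm (sub_pos.mpr hb))
    (ae_of_all _ fun z => ?_)).const_mul _
  ring_nf

lemma integrable_heatKernel {τ : ℝ} (hτ : 0 < τ) : Integrable (heatKernel n τ) := by
  simpa using integrable_heatKernel_mul_exp (n := n) (τ := τ) (b := 0) (by positivity)

lemma integrable_heatKernel_mul_norm {τ : ℝ} (hτ : 0 < τ) :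
    Integrable fun z : Fin n → ℝ => heatKernel n τ z * ‖z‖ := by
  have hb : 1 / (8 * τ) < 1 / (4 * τ) := by gcongr; norm_num
  refine ((integrable_heatKernel_mul_exp (n := n) hb).mul_const (1 + 8 * τ)).mono'
    ((continuous_heatKernel n τ).mul continuous_norm).aestronglyMeasurable
    (ae_of_all _ fun z => ?_)
  have hexp : sqNorm z / (8 * τ) ≤ rexp (1 / (8 * τ) * sqNorm z) := by
    grw [← Real.add_one_le_exp, one_div_mul_eq_div]
    linarith
  have hone : 1 ≤ rexp (1 / (8 * τ) * sqNorm z) :=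
    Real.one_le_exp (mul_nonneg (by positivity) (sqNorm_nonneg z))
  have hnorm : ‖z‖ ≤ rexp (1 / (8 * τ) * sqNorm z) * (1 + 8 * τ) := by
    rw [div_le_iff₀ (by positivity)] at hexp
    nlinarith [norm_sq_le_sqNorm z, sq_nonneg (‖z‖ - 1)]
  have hK := heatKernel_nonneg (n := n) hτ.le z
  rw [Real.norm_of_nonneg (by positivity), mul_assoc]
  gcongr

lemma sqrt_pow_mul_heatKernel_sqrt_smul {τ : ℝ} (hτ : 0 < τ) (z : Fin n → ℝ) :
    √τ ^ n * heatKernel n τ (√τ • z) = heatKernel n 1 z := by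
  have hpow : √τ ^ n * τ ^ (-(n : ℝ) / 2) = 1 := by
    rw [Real.sqrt_eq_rpow, ← Real.rpow_natCast, ← Real.rpow_mul hτ.le, ← Real.rpow_add hτ]
    ring_nf
    exact Real.rpow_zero τ
  have hexp : -(τ * sqNorm z) / (4 * τ) = -sqNorm z / (4 * 1) := by field_simp
  rw [heatKernel, heatKernel, sqNorm_smul, Real.sq_sqrt hτ.le, hexp,
    Real.mul_rpow (by positivity) hτ.le, mul_one]
  rw [mul_assoc ((4 * π) ^ _), mul_left_comm, ← mul_assoc (√τ ^ n), hpow, one_mul,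
    mul_one]

end HeatKernel

section HeatAverage

variable {n : ℕ} {T δ : ℝ} {v : SpaceTime n → ℂ}

/-- The evolution semigroup after the substitution `y = x - √τ z`, which moves all dependence on
`τ` from the kernel to the argument of `v`. -/
def heatAverage (n : ℕ) (v : SpaceTime n → ℂ) (τ : ℝ) (p : SpaceTime n) : ℂ :=
  ∫ z : Fin n → ℝ, (heatKernel n 1 z : ℂ) * v (p - (√τ • z, τ))

lemma heatSemigroup_eq_heatAverage (v : SpaceTime n → ℂ) {τ : ℝ} (hτ : 0 < τ)
    (p : SpaceTime n) : heatSemigroup n τ v p = heatAverage n v τ p := by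
  have hscale := Measure.integral_comp_smul_of_nonneg (volume : Measure (Fin n → ℝ))
    (fun y => (heatKernel n τ y : ℂ) * v (p.1 - y, p.2 - τ)) (√τ) (hR := Real.sqrt_nonneg τ)
  rw [Module.finrank_fin_fun, eq_comm, inv_smul_eq_iff₀ (by positivity)] at hscale
  rw [heatSemigroup, heatAverage, ← integral_sub_left_eq_self _ volume p.1]
  simp only [sub_sub_cancel]
  rw [hscale, ← integral_smul]
  congr 1
  ext z
  rw [← sqrt_pow_mul_heatKernel_sqrt_smul hτ z, Complex.real_smul, Complex.ofReal_mul, mul_assoc]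
  rfl

lemma fderiv_smul_prod (v : SpaceTime n → ℂ) (q : SpaceTime n) (z : Fin n → ℝ) (a c : ℝ) :
    fderiv ℝ v q (a • z, c) = c * pderivDir n (coordDir none) v q +
      a * ∑ i, (z i : ℂ) * pderivDir n (coordDir (some i)) v q := by
  have hdecomp : ((a • z, c) : SpaceTime n) =
      c • coordDir none + a • ∑ i, z i • coordDir (some i) := by
    ext j
    · simp [coordDir, eTime, eSpace, Prod.fst_sum, Finset.sum_apply, Pi.single_apply]
    · simp [coordDir, eTime, eSpace, Prod.snd_sum]
  rw [hdecomp]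
  simp only [map_add, map_smul, map_sum, Complex.real_smul]
  rfl

namespace HasExpDecay

lemma exists_norm_le_const (hδ : 0 ≤ δ) (h : HasExpDecay n T δ v) {T' : ℝ} (hT' : T' < T) :
    ∃ C, 0 ≤ C ∧ ∀ p : SpaceTime n, p.2 ≤ T' → ‖v p‖ ≤ C := by
  obtain ⟨C, hC⟩ := h.exists_norm_le hT'
  refine ⟨|C| * rexp (δ * T'), by positivity, fun p hp => (hC p hp).trans ?_⟩
  gcongr
  exact le_abs_self C

lemma continuous_slice (h : HasExpDecay n T δ v) {p : SpaceTime n} (a : ℝ) {τ : ℝ}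
    (hp : p.2 - τ < T) : Continuous fun z : Fin n → ℝ => v (p - (a • z, τ)) :=
  h.contDiffOn.continuousOn.comp_continuous (by fun_prop) fun _ => hp

lemma integrable_mul_slice (h : HasExpDecay n T δ v) {g : (Fin n → ℝ) → ℂ} (hg : Integrable g)
    {p : SpaceTime n} (a : ℝ) {τ : ℝ} (hp : p.2 - τ < T) :
    Integrable fun z : Fin n → ℝ => g z * v (p - (a • z, τ)) := by
  obtain ⟨C, hC⟩ := h.exists_norm_le hp
  exact hg.mul_bdd (c := C * rexp (δ * (p.2 - τ))) (h.continuous_slice a hp).aestronglyMeasurable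
    (ae_of_all _ fun z => hC (p - (a • z, τ)) le_rfl)

lemma integrable_heatKernel_mul_slice (h : HasExpDecay n T δ v) {p : SpaceTime n} (a : ℝ) {τ : ℝ}
    (hp : p.2 - τ < T) :
    Integrable fun z : Fin n → ℝ => (heatKernel n 1 z : ℂ) * v (p - (a • z, τ)) :=
  h.integrable_mul_slice (integrable_heatKernel one_pos).ofReal a hp

lemma integrable_heatKernel_mul_coord_mul_slice (h : HasExpDecay n T δ v) {p : SpaceTime n}
    (a : ℝ) {τ : ℝ} (hp : p.2 - τ < T) (i : Fin n) :
    Integrable fun z : Fin n → ℝ => ((heatKernel n 1 z * z i : ℝ) : ℂ) * v (p - (a • z, τ)) := by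
  have hcont : Continuous fun z : Fin n → ℝ => heatKernel n 1 z * z i :=
    (continuous_heatKernel n 1).mul (continuous_apply i)
  have hint : Integrable fun z : Fin n → ℝ => heatKernel n 1 z * z i := by
    refine (integrable_heatKernel_mul_norm one_pos).mono hcont.aestronglyMeasurable
      (ae_of_all _ fun z => ?_)
    rw [norm_mul, norm_mul, norm_norm]
    gcongr
    exact norm_le_pi_norm z i
  exact h.integrable_mul_slice hint.ofReal a hp

lemma integral_heatKernel_mul_coord_mul_slice (h : HasExpDecay n T δ v) {p : SpaceTime n}
    {τ : ℝ} (hp : p.2 - τ < T) (i : Fin n) :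
    ∫ z : Fin n → ℝ, ((heatKernel n 1 z * z i : ℝ) : ℂ) * v (p - (√τ • z, τ)) =
      -(2 * √τ : ℝ) * heatAverage n (pderivDir n (coordDir (some i)) v) τ p := by
  have hkernel (z : Fin n → ℝ) : HasLineDerivAt ℝ (fun z => (heatKernel n 1 z : ℂ))
      (((-1 / 2 : ℝ) : ℂ) * (heatKernel n 1 z * z i : ℝ)) z (Pi.single i 1) := by
    refine HasDerivAt.congr_deriv (hasLineDerivAt_heatKernel 1 z (Pi.single i 1)).ofReal_comp ?_
    rw [dotProduct_single_one]
    push_cast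
    ring
  have hslice (z : Fin n → ℝ) : HasLineDerivAt ℝ (fun z : Fin n → ℝ => v (p - (√τ • z, τ)))
      ((-√τ : ℝ) * pderivDir n (coordDir (some i)) v (p - (√τ • z, τ))) z (Pi.single i 1) := by
    have hline : HasDerivAt (fun t : ℝ => p - (√τ • (z + t • Pi.single i (1 : ℝ)), τ))
        (-√τ • coordDir (some i)) 0 := by
      simpa [coordDir, eSpace] using ((((hasDerivAt_id (0 : ℝ)).smul_const
        (Pi.single i (1 : ℝ) : Fin n → ℝ)).const_add z).const_smul √τ).prodMk
        (hasDerivAt_const (0 : ℝ) τ) |>.const_sub p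
    have hv : DifferentiableAt ℝ v (p - (√τ • (z + (0 : ℝ) • Pi.single i (1 : ℝ)), τ)) :=
      h.differentiableAt hp
    refine (hv.hasFDerivAt.comp_hasDerivAt 0 hline).congr_deriv ?_
    rw [zero_smul, add_zero, map_smul, Complex.real_smul]
    rfl
  have hparts := integral_bilinear_hasLineDerivAt_right_eq_neg_left_of_integrable
    (B := ContinuousLinearMap.mul ℝ ℂ)
    (((h.integrable_heatKernel_mul_coord_mul_slice √τ hp i).const_mul ((-1 / 2 : ℝ) : ℂ)).congr
      (ae_of_all _ fun z => (mul_assoc _ _ _).symm))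
    (((((h.pderivDir (some i)).integrable_heatKernel_mul_slice √τ hp)).const_mul
      ((-√τ : ℝ) : ℂ)).congr (ae_of_all _ fun z => mul_left_comm _ _ _))
    (h.integrable_heatKernel_mul_slice √τ hp) (fun z _ => hkernel z) (fun z _ => hslice z)
  simp only [ContinuousLinearMap.mul_apply', mul_left_comm _ ((-√τ : ℝ) : ℂ),
    mul_assoc ((-1 / 2 : ℝ) : ℂ), integral_const_mul] at hparts
  rw [heatAverage]
  push_cast at hparts ⊢
  linear_combination (-2) * hparts

end HasExpDecay

end HeatAverage

section HeatAverageDerivatives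

open scoped Topology

variable {n : ℕ} {T δ : ℝ} {v : SpaceTime n → ℂ}

namespace HasExpDecay

lemma exists_norm_fderiv_le (hδ : 0 ≤ δ) (h : HasExpDecay n T δ v) {T' : ℝ} (hT' : T' < T) :
    ∃ C, 0 ≤ C ∧ ∀ p : SpaceTime n, p.2 ≤ T' → ‖fderiv ℝ v p‖ ≤ C := by
  choose C hC₀ hC using fun o => (h.pderivDir o).exists_norm_le_const hδ hT'
  refine ⟨C none + ∑ i, C (some i), add_nonneg (hC₀ _) (Finset.sum_nonneg fun _ _ => hC₀ _),
    fun p hp => ContinuousLinearMap.opNorm_le_bound _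
      (add_nonneg (hC₀ _) (Finset.sum_nonneg fun _ _ => hC₀ _)) fun w => ?_⟩
  have hw := fderiv_smul_prod v p w.1 1 w.2
  rw [one_smul, Complex.ofReal_one, one_mul] at hw
  rw [hw, add_mul, Finset.sum_mul]
  refine (norm_add_le _ _).trans (add_le_add ?_ (norm_sum_le_of_le _ fun i _ => ?_)) <;>
    rw [norm_mul, Complex.norm_real, mul_comm]
  · exact mul_le_mul (hC _ p hp) (norm_snd_le w) (norm_nonneg _) (hC₀ _)
  · exact mul_le_mul (hC _ p hp) ((norm_le_pi_norm w.1 i).trans (norm_fst_le w)) (norm_nonneg _)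
      (hC₀ _)

lemma hasDerivAt_integral_heatKernel_mul_comp (hδ : 0 ≤ δ) (h : HasExpDecay n T δ v)
    {γ γ' : ℝ → (Fin n → ℝ) → SpaceTime n} {S : Set ℝ} {r₀ T' A B : ℝ} (hT' : T' < T)
    (hS : S ∈ 𝓝 r₀) (hγ : ∀ r ∈ S, Continuous (γ r)) (hγ' : Continuous (γ' r₀))
    (htime : ∀ r ∈ S, ∀ z, (γ r z).2 ≤ T') (hbound : ∀ r ∈ S, ∀ z, ‖γ' r z‖ ≤ A + B * ‖z‖)
    (hderiv : ∀ r ∈ S, ∀ z, HasDerivAt (γ · z) (γ' r z) r) :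
    HasDerivAt (fun r => ∫ z, (heatKernel n 1 z : ℂ) * v (γ r z))
      (∫ z, (heatKernel n 1 z : ℂ) * fderiv ℝ v (γ r₀ z) (γ' r₀ z)) r₀ := by
  have hr₀ := mem_of_mem_nhds hS
  have hK : Continuous fun z : Fin n → ℝ => (heatKernel n 1 z : ℂ) :=
    Complex.continuous_ofReal.comp (continuous_heatKernel n 1)
  have hv (r) (hr : r ∈ S) : Continuous fun z => v (γ r z) :=
    h.contDiffOn.continuousOn.comp_continuous (hγ r hr) fun z => (htime r hr z).trans_lt hT'
  have hdv : Continuous fun z => fderiv ℝ v (γ r₀ z) (γ' r₀ z) :=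
    ((h.contDiffOn.continuousOn_fderiv_of_isOpen (isOpen_pastOf n T) (by simp)).comp_continuous
      (hγ r₀ hr₀) fun z => (htime r₀ hr₀ z).trans_lt hT').clm_apply hγ'
  obtain ⟨C, -, hC⟩ := h.exists_norm_le_const hδ hT'
  obtain ⟨D, hD₀, hD⟩ := h.exists_norm_fderiv_le hδ hT'
  have hint : Integrable fun z : Fin n → ℝ => heatKernel n 1 z * (D * (A + B * ‖z‖)) :=
    (((integrable_heatKernel one_pos).mul_const (D * A)).add
      ((integrable_heatKernel_mul_norm one_pos).mul_const (D * B))).congr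
      (ae_of_all _ fun z => by simp only [Pi.add_apply]; ring)
  refine (hasDerivAt_integral_of_dominated_loc_of_deriv_le
    (F' := fun r z => (heatKernel n 1 z : ℂ) * fderiv ℝ v (γ r z) (γ' r z)) hS ?_
    ((integrable_heatKernel one_pos).ofReal.mul_bdd (hv r₀ hr₀).aestronglyMeasurable
      (ae_of_all _ fun z => hC _ (htime r₀ hr₀ z))) (hK.mul hdv).aestronglyMeasurable
    (ae_of_all _ fun z r hr => ?_) hint (ae_of_all _ fun z r hr => ?_)).2
  · filter_upwards [hS] with r hr
    exact (hK.mul (hv r hr)).aestronglyMeasurable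
  · rw [norm_mul, Complex.norm_real, Real.norm_of_nonneg (heatKernel_nonneg zero_le_one z)]
    gcongr
    · exact heatKernel_nonneg zero_le_one z
    · exact (ContinuousLinearMap.le_of_opNorm_le _ (hD _ (htime r hr z)) _).trans
        (by grw [hbound r hr z])
  · exact ((h.differentiableAt ((htime r hr z).trans_lt hT')).hasFDerivAt.comp_hasDerivAt r
      (hderiv r hr z)).const_mul _

lemma hasDerivAt_heatAverage_line (hδ : 0 ≤ δ) (h : HasExpDecay n T δ v) (w : SpaceTime n)
    {p : SpaceTime n} {τ r₀ : ℝ} (hp : (p + r₀ • w).2 - τ < T) :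
    HasDerivAt (fun r : ℝ => heatAverage n v τ (p + r • w))
      (heatAverage n (pderivDir n w v) τ (p + r₀ • w)) r₀ := by
  obtain ⟨T', hpT', hT'⟩ := exists_between hp
  have hcont : Continuous fun r : ℝ => (p + r • w).2 - τ := by fun_prop
  refine h.hasDerivAt_integral_heatKernel_mul_comp hδ (A := ‖w‖) (B := 0) hT'
    (γ := fun r z => p + r • w - (√τ • z, τ)) (γ' := fun _ _ => w)
    (hcont.continuousAt.eventually_lt_const hpT') (fun r _ => by fun_prop) continuous_const
    (fun r hr z => le_of_lt hr) (fun r _ z => by simp) fun r _ z => ?_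
  simpa using (((hasDerivAt_id r).smul_const w).const_add p).sub_const (√τ • z, τ)

lemma heatAverage_heatOp (h : HasExpDecay n T δ v) {p : SpaceTime n} {τ : ℝ}
    (hp : p.2 - τ < T) :
    heatAverage n (heatOp n v) τ p = heatAverage n (pderivDir n (coordDir none) v) τ p -
      ∑ i, heatAverage n
        (pderivDir n (coordDir (some i)) (pderivDir n (coordDir (some i)) v)) τ p := by
  have hspace (i : Fin n) := ((h.pderivDir (some i)).pderivDir
    (some i)).integrable_heatKernel_mul_slice √τ hp
  simp only [heatAverage]
  rw [← integral_finsetSum _ fun i _ => hspace i,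
    ← integral_sub ((h.pderivDir none).integrable_heatKernel_mul_slice √τ hp)
      (integrable_finsetSum _ fun i _ => hspace i)]
  simp only [← Finset.mul_sum, ← mul_sub]
  rfl

lemma integral_heatKernel_mul_fderiv (h : HasExpDecay n T δ v) {p : SpaceTime n} {τ : ℝ}
    (hτ : 0 < τ) (hp : p.2 - τ < T) :
    ∫ z : Fin n → ℝ, (heatKernel n 1 z : ℂ) *
        fderiv ℝ v (p - (√τ • z, τ)) (-(1 / (2 * √τ)) • z, -1) =
      -heatAverage n (heatOp n v) τ p := by
  have hspace (i : Fin n) :=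
    (h.pderivDir (some i)).integrable_heatKernel_mul_coord_mul_slice √τ hp i
  have hexpand (z : Fin n → ℝ) : (heatKernel n 1 z : ℂ) *
        fderiv ℝ v (p - (√τ • z, τ)) (-(1 / (2 * √τ)) • z, -1) =
      -((heatKernel n 1 z : ℂ) * pderivDir n (coordDir none) v (p - (√τ • z, τ))) -
        (1 / (2 * √τ) : ℝ) * ∑ i, ((heatKernel n 1 z * z i : ℝ) : ℂ) *
          pderivDir n (coordDir (some i)) v (p - (√τ • z, τ)) := by
    simp only [fderiv_smul_prod, Complex.ofReal_mul, mul_assoc, ← Finset.mul_sum]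
    push_cast
    ring
  have hsqrt : ((1 / (2 * √τ) : ℝ) : ℂ) * -(2 * √τ : ℝ) = -1 := by
    rw [← Complex.ofReal_neg, ← Complex.ofReal_mul, mul_neg, one_div_mul_cancel (by positivity)]
    simp
  simp only [hexpand]
  rw [integral_sub ((h.pderivDir none).integrable_heatKernel_mul_slice √τ hp).fun_neg
      ((integrable_finsetSum _ fun i _ => hspace i).const_mul _), integral_neg,
    integral_const_mul, integral_finsetSum _ fun i _ => hspace i, h.heatAverage_heatOp hp]
  simp only [(h.pderivDir (some _)).integral_heatKernel_mul_coord_mul_slice hp]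
  rw [← Finset.mul_sum, ← mul_assoc, hsqrt]
  simp only [heatAverage]
  ring

/-- Gaussian integration by parts turns the chain-rule factor `-z / (2√τ)` into a Laplacian. -/
lemma hasDerivAt_heatAverage (hδ : 0 ≤ δ) (h : HasExpDecay n T δ v) {p : SpaceTime n}
    (hp : p.2 < T) {τ : ℝ} (hτ : 0 < τ) :
    HasDerivAt (fun τ => heatAverage n v τ p) (-heatAverage n (heatOp n v) τ p) τ := by
  rw [← h.integral_heatKernel_mul_fderiv hτ (by linarith)]
  refine h.hasDerivAt_integral_heatKernel_mul_comp hδ (A := 1) (B := 1 / (2 * √(τ / 2))) hp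
    (γ := fun r z => p - (√r • z, r)) (γ' := fun r z => (-(1 / (2 * √r)) • z, -1))
    (Ioi_mem_nhds (half_lt_self hτ)) (fun r _ => by fun_prop) (by fun_prop)
    (fun r hr z => ?_) (fun r hr z => ?_) fun r hr z => ?_
  all_goals have hr₀ : 0 < r := (half_pos hτ).trans hr
  · simpa using hr₀.le
  · have hspace : ‖-(1 / (2 * √r)) • z‖ ≤ 1 / (2 * √(τ / 2)) * ‖z‖ := by
      rw [norm_smul, norm_neg, Real.norm_of_nonneg (by positivity)]
      gcongr
      exact le_of_lt hr
    grw [Prod.norm_mk, hspace, norm_neg, norm_one]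
    exact max_le (by linarith) (le_add_of_nonneg_right (by positivity))
  · have hcurve := ((Real.hasDerivAt_sqrt hr₀.ne').smul_const z).prodMk (hasDerivAt_id r)
    simpa [neg_smul] using hcurve.const_sub p

end HasExpDecay

end HeatAverageDerivatives

section HeatPower

open scoped Topology

variable {n : ℕ} {T δ : ℝ} {U : Set (SpaceTime n)} {v : SpaceTime n → ℂ}

lemma sq_div_le_of_le_norm_prod {r τ : ℝ} {z : Fin n → ℝ} (hr : 0 < r) (hτ : 0 < τ)
    (h : r ≤ ‖((√τ • z, τ) : SpaceTime n)‖) : r ^ 2 / 8 / τ ≤ r / 8 + 1 / 8 * sqNorm z := by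
  rw [div_le_iff₀ hτ]
  rw [Prod.norm_mk, norm_smul, Real.norm_of_nonneg (Real.sqrt_nonneg τ),
    Real.norm_of_nonneg hτ.le, le_max_iff] at h
  rcases h with h | h
  · have hz : r ^ 2 ≤ τ * sqNorm z := by
      grw [h, mul_pow, Real.sq_sqrt hτ.le, norm_sq_le_sqNorm z]
    nlinarith [mul_pos hr hτ]
  · nlinarith [mul_nonneg hτ.le (sqNorm_nonneg z)]

lemma norm_comp_sub_le (hδ : 0 ≤ δ) {p : SpaceTime n} {r τ A T' : ℝ} (hr : 0 < r)
    (hτ : 0 < τ) (hA : ∀ q : SpaceTime n, q.2 ≤ T' → ‖v q‖ ≤ A * rexp (δ * q.2)) (hp : p.2 ≤ T')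
    (hv : EqOn v 0 (Metric.ball p r)) (z : Fin n → ℝ) :
    ‖v (p - (√τ • z, τ))‖ ≤ rexp (1 / 8 * sqNorm z) *
      (A * rexp (δ * T') * rexp (r / 8) * (rexp (-(r ^ 2 / 8) / τ) * rexp (-(δ * τ)))) := by
  have hA₀ : 0 ≤ A :=
    nonneg_of_mul_nonneg_left ((norm_nonneg _).trans (hA p hp)) (Real.exp_pos _)
  by_cases hz : ‖((√τ • z, τ) : SpaceTime n)‖ < r
  · rw [hv (by simpa [Metric.mem_ball, dist_eq_norm] using hz), Pi.zero_apply, norm_zero]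
    positivity
  have htime : (p - (√τ • z, τ)).2 = p.2 - τ := rfl
  have hexp : rexp (δ * (p.2 - τ)) ≤ rexp (1 / 8 * sqNorm z) *
      (rexp (δ * T') * rexp (r / 8) * (rexp (-(r ^ 2 / 8) / τ) * rexp (-(δ * τ)))) := by
    simp only [← Real.exp_add]
    refine Real.exp_le_exp.mpr ?_
    have hgap := sq_div_le_of_le_norm_prod hr hτ (not_lt.mp hz)
    have hlin := mul_le_mul_of_nonneg_left hp hδ
    rw [neg_div]
    linarith
  calc ‖v (p - (√τ • z, τ))‖ ≤ A * rexp (δ * (p.2 - τ)) :=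
        hA _ (by rw [htime]; linarith)
    _ ≤ A * (rexp (1 / 8 * sqNorm z) * (rexp (δ * T') * rexp (r / 8) *
        (rexp (-(r ^ 2 / 8) / τ) * rexp (-(δ * τ))))) := by gcongr
    _ = _ := by ring

lemma norm_heatAverage_le (hδ : 0 ≤ δ) {p : SpaceTime n} {r τ A T' : ℝ} (hr : 0 < r)
    (hτ : 0 < τ) (hA : ∀ q : SpaceTime n, q.2 ≤ T' → ‖v q‖ ≤ A * rexp (δ * q.2)) (hp : p.2 ≤ T')
    (hv : EqOn v 0 (Metric.ball p r)) :
    ‖heatAverage n v τ p‖ ≤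
      (∫ z : Fin n → ℝ, heatKernel n 1 z * rexp (1 / 8 * sqNorm z)) *
        (A * rexp (δ * T') * rexp (r / 8)) * (rexp (-(r ^ 2 / 8) / τ) * rexp (-(δ * τ))) := by
  rw [mul_assoc, ← integral_mul_const]
  refine norm_integral_le_of_norm_le
    ((integrable_heatKernel_mul_exp (by norm_num)).mul_const _) (ae_of_all _ fun z => ?_)
  rw [norm_mul, Complex.norm_real, Real.norm_of_nonneg (heatKernel_nonneg zero_le_one z), mul_assoc]
  exact mul_le_mul_of_nonneg_left (norm_comp_sub_le hδ hr hτ hA hp hv z)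
    (heatKernel_nonneg zero_le_one z)

/-- `v` decays exponentially in the past, in the sense of `HasExpDecay`, and vanishes on `U`. -/
structure HasExpDecayZeroOn (n : ℕ) (T δ : ℝ) (U : Set (SpaceTime n)) (v : SpaceTime n → ℂ) : Prop
    extends HasExpDecay n T δ v where
  eqOn_zero : EqOn v 0 U

/-- The value `(1/Γ(-s)) ∫₀^∞ (e^{-τ𝓗} v)(p) τ^{-1-s} dτ` of `𝓗^s v(p)` at a point `p` near which
`v` vanishes. Unlike in `fracHeat`, `s` may be any real number: the integral always converges there,
and for `s = m ∈ ℕ` the conventions `Γ(-m) = 0` and `1 / 0 = 0` give the correct value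
`(∂_t - Δ)^m v(p) = 0`. -/
def heatPower (n : ℕ) (s : ℝ) (v : SpaceTime n → ℂ) (p : SpaceTime n) : ℂ :=
  1 / (Real.Gamma (-s) : ℂ) * negMoment (fun τ => heatAverage n v τ p) s

lemma fracHeat_eq_heatPower (s : ℝ) {p : SpaceTime n} (hp : v p = 0) :
    fracHeat n s v p = heatPower n s v p := by
  simp only [fracHeat, heatPower, negMoment, hp, sub_zero]
  congr 1
  exact setIntegral_congr_fun measurableSet_Ioi fun τ hτ => by
    simp only [heatSemigroup_eq_heatAverage v hτ p]

namespace HasExpDecayZeroOn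

protected lemma pderivDir (hU : IsOpen U) (h : HasExpDecayZeroOn n T δ U v)
    (o : Option (Fin n)) : HasExpDecayZeroOn n T δ U (pderivDir n (coordDir o) v) :=
  ⟨h.toHasExpDecay.pderivDir o, pderivDir_eqOn_zero hU h.eqOn_zero _⟩

protected lemma heatOp (hU : IsOpen U) (h : HasExpDecayZeroOn n T δ U v) :
    HasExpDecayZeroOn n T δ U (heatOp n v) :=
  ⟨h.toHasExpDecay.heatOp, heatOp_eqOn_zero hU h.eqOn_zero⟩

lemma iterate_heatOp (hU : IsOpen U) (h : HasExpDecayZeroOn n T δ U v) (m : ℕ) :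
    HasExpDecayZeroOn n T δ U ((heatOp n)^[m] v) :=
  Function.Iterate.rec (HasExpDecayZeroOn n T δ U) h (fun _ hw => hw.heatOp hU) m

lemma exists_forall_flatExpDecay (n : ℕ) {U : Set (SpaceTime n)} (hδ : 0 < δ) (hU : IsOpen U)
    (hUT : U ⊆ pastOf n T) {p₀ : SpaceTime n} (hp₀ : p₀ ∈ U) :
    ∃ c, ∃ V ∈ 𝓝 p₀, ∀ v, HasExpDecayZeroOn n T δ U v →
      ∃ C, ∀ p ∈ V, FlatExpDecay c δ C (fun τ => heatAverage n v τ p) := by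
  obtain ⟨ρ, hρ, hball⟩ := Metric.isOpen_iff.mp hU p₀ hp₀
  obtain ⟨T', hp₀T', hT'⟩ := exists_between (show p₀.2 < T from hUT hp₀)
  refine ⟨(ρ / 2) ^ 2 / 8, Metric.ball p₀ (ρ / 2) ∩ pastOf n T',
    Filter.inter_mem (Metric.ball_mem_nhds p₀ (half_pos hρ))
      ((isOpen_pastOf n T').mem_nhds hp₀T'), fun v hv => ?_⟩
  obtain ⟨A, hA⟩ := hv.exists_norm_le hT'
  refine ⟨_, fun p hp => ⟨by positivity, hδ, fun τ hτ => ?_, fun τ hτ =>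
    norm_heatAverage_le hδ.le (half_pos hρ) hτ hA (le_of_lt hp.2) (hv.eqOn_zero.mono ?_)⟩⟩
  · exact (hv.hasDerivAt_heatAverage hδ.le (lt_trans hp.2 hT') hτ).continuousAt.continuousWithinAt
  · refine (Metric.ball_subset_ball' ?_).trans hball
    linarith [Metric.mem_ball.mp hp.1]

lemma exists_flatExpDecay (hδ : 0 < δ) (hU : IsOpen U) (hUT : U ⊆ pastOf n T)
    (h : HasExpDecayZeroOn n T δ U v) {p : SpaceTime n} (hp : p ∈ U) :
    ∃ c C, FlatExpDecay c δ C (fun τ => heatAverage n v τ p) := by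
  obtain ⟨c, V, hV, hdecay⟩ := exists_forall_flatExpDecay n hδ hU hUT hp
  obtain ⟨C, hC⟩ := hdecay v h
  exact ⟨c, C, hC p (mem_of_mem_nhds hV)⟩

lemma hasDerivAt_heatPower_line (hδ : 0 < δ) (hU : IsOpen U) (hUT : U ⊆ pastOf n T)
    (h : HasExpDecayZeroOn n T δ U v) {p : SpaceTime n} (hp : p ∈ U) (s : ℝ)
    (o : Option (Fin n)) :
    HasDerivAt (fun r : ℝ => heatPower n s v (p + r • coordDir o))
      (heatPower n s (pderivDir n (coordDir o) v) p) 0 := by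
  obtain ⟨c, V, hV, hdecay⟩ := exists_forall_flatExpDecay n hδ hU hUT hp
  obtain ⟨C, hC⟩ := hdecay v h
  obtain ⟨C', hC'⟩ := hdecay _ (h.pderivDir hU o)
  have hline : (fun r : ℝ => p + r • coordDir o) ⁻¹' (V ∩ U) ∈ 𝓝 0 := by
    refine ContinuousAt.preimage_mem_nhds (by fun_prop) ?_
    simpa using Filter.inter_mem hV (hU.mem_nhds hp)
  have hderiv := hasDerivAt_negMoment hline (fun r hr => hC _ hr.1) (fun r hr => hC' _ hr.1)
    (fun τ hτ r hr => h.hasDerivAt_heatAverage_line hδ.le (coordDir o)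
      ((sub_lt_self _ hτ).trans (hUT hr.2))) s
  simpa only [heatPower, zero_smul, add_zero] using hderiv.const_mul (1 / (Real.Gamma (-s) : ℂ))

lemma heatPower_heatOp_eq_sub_sum (hδ : 0 < δ) (hU : IsOpen U) (hUT : U ⊆ pastOf n T)
    (h : HasExpDecayZeroOn n T δ U v) {p : SpaceTime n} (hp : p ∈ U) (s : ℝ) :
    heatPower n s (heatOp n v) p = heatPower n s (pderivDir n (coordDir none) v) p -
      ∑ i, heatPower n s
        (pderivDir n (coordDir (some i)) (pderivDir n (coordDir (some i)) v)) p := by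
  have hint {w : SpaceTime n → ℂ} (hw : HasExpDecayZeroOn n T δ U w) :
      IntegrableOn (fun τ => heatAverage n w τ p * ((τ ^ (-1 - s) : ℝ) : ℂ)) (Ioi 0) := by
    obtain ⟨c, C, hflat⟩ := hw.exists_flatExpDecay hδ hU hUT hp
    exact hflat.integrableOn_mul_rpow _
  have hspace (i : Fin n) := hint ((h.pderivDir hU (some i)).pderivDir hU (some i))
  simp only [heatPower, negMoment]
  rw [← Finset.mul_sum, ← mul_sub, ← integral_finsetSum _ fun i _ => hspace i,
    ← integral_sub (hint (h.pderivDir hU none)) (integrable_finsetSum _ fun i _ => hspace i)]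
  congr 1
  refine setIntegral_congr_fun measurableSet_Ioi fun τ hτ => ?_
  simp only [h.heatAverage_heatOp ((sub_lt_self _ hτ).trans (hUT hp)), sub_mul, Finset.sum_mul]

lemma heatPower_heatOp (hδ : 0 < δ) (hU : IsOpen U) (hUT : U ⊆ pastOf n T)
    (h : HasExpDecayZeroOn n T δ U v) {p : SpaceTime n} (hp : p ∈ U) (s : ℝ) :
    heatPower n s (heatOp n v) p = heatPower n (s + 1) v p := by
  obtain ⟨c, C, hflat⟩ := h.exists_flatExpDecay hδ hU hUT hp
  obtain ⟨c', C', hflat'⟩ := (h.heatOp hU).exists_flatExpDecay hδ hU hUT hp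
  have hneg : FlatExpDecay c' δ C' (fun τ => -heatAverage n (heatOp n v) τ p) :=
    ⟨hflat'.c_pos, hflat'.δ_pos, hflat'.continuousOn.neg, fun τ hτ => by
      simpa only [norm_neg] using hflat'.norm_le τ hτ⟩
  have hparts : negMoment (fun τ => heatAverage n (heatOp n v) τ p) s =
      -(1 + s) * negMoment (fun τ => heatAverage n v τ p) (s + 1) := by
    have := hflat.negMoment_of_hasDerivAt hneg
      (fun τ hτ => h.hasDerivAt_heatAverage hδ.le (hUT hp) hτ) s
    simp only [negMoment, neg_mul, integral_neg] at this ⊢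
    linear_combination -this
  have hGamma := Complex.one_div_Gamma_eq_self_mul_one_div_Gamma_add_one (-((s + 1 : ℝ) : ℂ))
  have hshift : -((s + 1 : ℝ) : ℂ) + 1 = (-s : ℝ) := by push_cast; ring
  rw [heatPower, heatPower, hparts, one_div, one_div, ← Complex.Gamma_ofReal,
    ← Complex.Gamma_ofReal, Complex.ofReal_neg (s + 1), hGamma, hshift]
  push_cast
  ring

lemma heatPower_iterate_heatOp (hδ : 0 < δ) (hU : IsOpen U) (hUT : U ⊆ pastOf n T)
    (h : HasExpDecayZeroOn n T δ U v) {p : SpaceTime n} (hp : p ∈ U) (l : ℕ) (s : ℝ) :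
    heatPower n s ((heatOp n)^[l] v) p = heatPower n (s + l) v p := by
  induction l generalizing s with
  | zero => simp
  | succ l ih =>
    rw [Function.iterate_succ_apply', (h.iterate_heatOp hU l).heatPower_heatOp hδ hU hUT hp,
      ih]
    push_cast
    ring_nf

lemma fracHeatPoly_eq_heatPower (hδ : 0 < δ) (hU : IsOpen U) (hUT : U ⊆ pastOf n T)
    (h : HasExpDecayZeroOn n T δ U v) {p : SpaceTime n} (hp : p ∈ U) {α : ℝ} (hα : 0 ≤ α) :
    fracHeatPoly n α v p = heatPower n α v p := by
  have hfloor : ((⌊α⌋.toNat : ℕ) : ℝ) = ⌊α⌋ := by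
    exact_mod_cast Int.toNat_of_nonneg (Int.floor_nonneg.mpr hα)
  rw [fracHeatPoly, fracHeat_eq_heatPower _ ((h.iterate_heatOp hU _).eqOn_zero hp),
    h.heatPower_iterate_heatOp hδ hU hUT hp, hfloor, sub_add_cancel]

end HasExpDecayZeroOn

section Relations

variable {ι : Type*} [Fintype ι] {d : ι → ℂ} {s : ι → ℝ} {v : ι → SpaceTime n → ℂ}

lemma sum_heatPower_pderivDir_eq_zero (hδ : 0 < δ) (hU : IsOpen U) (hUT : U ⊆ pastOf n T)
    (hv : ∀ k, HasExpDecayZeroOn n T δ U (v k))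
    (hrel : ∀ p ∈ U, ∑ k, d k * heatPower n (s k) (v k) p = 0) (o : Option (Fin n)) :
    ∀ p ∈ U, ∑ k, d k * heatPower n (s k) (pderivDir n (coordDir o) (v k)) p = 0 := by
  intro p hp
  have hline : ∀ᶠ r : ℝ in 𝓝 0, p + r • coordDir o ∈ U :=
    ContinuousAt.preimage_mem_nhds (by fun_prop) (hU.mem_nhds (by simpa using hp))
  refine HasDerivAt.unique (HasDerivAt.fun_sum fun k _ =>
    ((hv k).hasDerivAt_heatPower_line hδ hU hUT hp (s k) o).const_mul (d k))
    ((hasDerivAt_const (0 : ℝ) (0 : ℂ)).congr_of_eventuallyEq ?_)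
  filter_upwards [hline] with r hr using hrel _ hr

lemma sum_heatPower_heatOp_eq_zero (hδ : 0 < δ) (hU : IsOpen U) (hUT : U ⊆ pastOf n T)
    (hv : ∀ k, HasExpDecayZeroOn n T δ U (v k))
    (hrel : ∀ p ∈ U, ∑ k, d k * heatPower n (s k) (v k) p = 0) :
    ∀ p ∈ U, ∑ k, d k * heatPower n (s k) (heatOp n (v k)) p = 0 := by
  intro p hp
  have htime := sum_heatPower_pderivDir_eq_zero hδ hU hUT hv hrel none p hp
  have hspace (i : Fin n) := sum_heatPower_pderivDir_eq_zero hδ hU hUT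
    (fun k => (hv k).pderivDir hU (some i))
    (sum_heatPower_pderivDir_eq_zero hδ hU hUT hv hrel (some i)) (some i) p hp
  simp only [(hv _).heatPower_heatOp_eq_sub_sum hδ hU hUT hp, mul_sub, Finset.mul_sum,
    Finset.sum_sub_distrib, htime]
  rw [Finset.sum_comm]
  simp only [hspace, Finset.sum_const_zero, sub_zero]

lemma sum_heatPower_add_natCast_eq_zero (hδ : 0 < δ) (hU : IsOpen U) (hUT : U ⊆ pastOf n T)
    (hv : ∀ k, HasExpDecayZeroOn n T δ U (v k))
    (hrel : ∀ p ∈ U, ∑ k, d k * heatPower n (s k) (v k) p = 0) (j : ℕ) :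
    ∀ p ∈ U, ∑ k, d k * heatPower n (s k + j) (v k) p = 0 := by
  induction j with
  | zero => simpa using hrel
  | succ j ih =>
    intro p hp
    have hshift (k : ι) : s k + (j + 1 : ℕ) = s k + j + 1 := by push_cast; ring
    simpa only [hshift, ← (hv _).heatPower_heatOp hδ hU hUT hp] using
      sum_heatPower_heatOp_eq_zero hδ hU hUT hv ih p hp

end Relations

end HeatPower

section HeatUniqueness

open Filter Topology

variable {n : ℕ} {τ : ℝ}

lemma sqNorm_smul_add (r : ℝ) (ξ z : Fin n → ℝ) :
    sqNorm (r • ξ + z) = r ^ 2 * sqNorm ξ + 2 * r * (ξ ⬝ᵥ z) + sqNorm z := by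
  simp only [sqNorm, dotProduct, Finset.mul_sum, ← Finset.sum_add_distrib]
  refine Finset.sum_congr rfl fun i _ => ?_
  simp only [Pi.add_apply, Pi.smul_apply, smul_eq_mul]
  ring

lemma abs_dotProduct_le {a : ℝ} (ha : 0 < a) (ξ z : Fin n → ℝ) :
    |ξ ⬝ᵥ z| ≤ a * sqNorm ξ + 1 / (4 * a) * sqNorm z := by
  have hpos := sqNorm_smul_add (2 * a) ξ z ▸ sqNorm_nonneg _
  have hneg := sqNorm_smul_add (-(2 * a)) ξ z ▸ sqNorm_nonneg _
  have hscale : a * sqNorm ξ + 1 / (4 * a) * sqNorm z =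
      ((2 * a) ^ 2 * sqNorm ξ + sqNorm z) / (4 * a) := by
    field_simp
    ring
  rw [hscale, le_div_iff₀ (by positivity)]
  rcases abs_cases (ξ ⬝ᵥ z) with h | h <;> rw [h.1] <;> linarith

lemma heatKernel_add_smul_sub (hτ : 0 < τ) (r : ℝ) (ξ x y : Fin n → ℝ) :
    heatKernel n τ (x + (2 * τ * r) • ξ - y) = rexp (-(r * (ξ ⬝ᵥ x)) - τ * r ^ 2 * sqNorm ξ) *
      (heatKernel n τ (x - y) * rexp (r * (ξ ⬝ᵥ y))) := by
  have hsq : -sqNorm (x + (2 * τ * r) • ξ - y) / (4 * τ) =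
      (-(r * (ξ ⬝ᵥ x)) - τ * r ^ 2 * sqNorm ξ) + (-sqNorm (x - y) / (4 * τ) + r * (ξ ⬝ᵥ y)) := by
    rw [add_comm x, add_sub_assoc, sqNorm_smul_add, dotProduct_sub]
    field_simp
    ring
  rw [heatKernel, hsq, Real.exp_add, Real.exp_add, heatKernel]
  ring

lemma hasExpMoment_heatKernel_mul (hτ : 0 < τ) {f : (Fin n → ℝ) → ℂ} {M : ℝ}
    (hf : AEStronglyMeasurable f) (hM : ∀ y, ‖f y‖ ≤ M) (x ξ : Fin n → ℝ) :
    HasExpMoment volume (fun y => (heatKernel n τ (x - y) : ℂ) * f y) (ξ ⬝ᵥ ·) 1 := by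
  have hK : Continuous fun y => heatKernel n τ (x - y) :=
    (continuous_heatKernel n τ).comp (by fun_prop)
  have hmeas : AEStronglyMeasurable fun y => (heatKernel n τ (x - y) : ℂ) * f y :=
    (Complex.continuous_ofReal.comp hK).aestronglyMeasurable.mul hf
  have hdot : Continuous fun y : Fin n → ℝ => ξ ⬝ᵥ y := by fun_prop
  have hint := ((integrable_heatKernel_mul_exp (n := n) (τ := τ) (b := 1 / (4 * (2 * τ)))
    (by gcongr; linarith)).comp_sub_left x).mul_const
      (rexp (|ξ ⬝ᵥ x| + 2 * τ * sqNorm ξ) * M)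
  refine ⟨hmeas, hdot.measurable.aemeasurable, hint.mono'
    (hmeas.norm.mul (Real.continuous_exp.comp (hdot.abs.const_mul 1)).aestronglyMeasurable)
    (ae_of_all _ fun y => ?_)⟩
  have hexp : rexp |ξ ⬝ᵥ y| ≤ rexp (1 / (4 * (2 * τ)) * sqNorm (x - y)) *
      rexp (|ξ ⬝ᵥ x| + 2 * τ * sqNorm ξ) := by
    rw [← Real.exp_add, Real.exp_le_exp]
    have hsub := abs_sub (ξ ⬝ᵥ x) (ξ ⬝ᵥ (x - y))
    rw [dotProduct_sub, sub_sub_cancel, ← dotProduct_sub] at hsub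
    linarith [abs_dotProduct_le (by positivity : 0 < 2 * τ) ξ (x - y)]
  have hK₀ := heatKernel_nonneg hτ.le (x - y)
  rw [Real.norm_of_nonneg (by positivity), norm_mul, Complex.norm_real, Real.norm_of_nonneg hK₀,
    one_mul]
  grw [hM y, hexp]
  · exact le_of_eq (by ring)
  · exact mul_nonneg hK₀ ((norm_nonneg _).trans (hM y))

/-- Moving `x` along the line `x₀ + ℝξ` multiplies the Gaussian weight by `e^{rξ·y}`, up to a factor
independent of `y`. So the Laplace transform of `G_τ(x₀ - y) f(y)` vanishes near `0`, and hence so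
does its Fourier transform. -/
lemma eq_zero_of_eventually_integral_heatKernel_mul_eq_zero (hτ : 0 < τ) {f : (Fin n → ℝ) → ℂ}
    {M : ℝ} (hf : AEStronglyMeasurable f) (hM : ∀ y, ‖f y‖ ≤ M) {x₀ : Fin n → ℝ}
    (h : ∀ᶠ x in 𝓝 x₀, ∫ y, (heatKernel n τ (x - y) : ℂ) * f y = 0) {y : Fin n → ℝ}
    (hy : ContinuousAt f y) : f y = 0 := by
  set g : (Fin n → ℝ) → ℂ := fun y => (heatKernel n τ (x₀ - y) : ℂ) * f y
  have hg (ξ : Fin n → ℝ) : HasExpMoment volume g (ξ ⬝ᵥ ·) 1 :=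
    hasExpMoment_heatKernel_mul hτ hf hM x₀ ξ
  have hmgf (ξ : Fin n → ℝ) : ∃ᶠ z in 𝓝[≠] 0, weightedMGF volume g (ξ ⬝ᵥ ·) z = 0 := by
    have hline : Tendsto (fun r : ℝ => x₀ + (2 * τ * r) • ξ) (𝓝[>] 0) (𝓝 x₀) :=
      tendsto_nhdsWithin_of_tendsto_nhds (Continuous.tendsto' (by fun_prop) _ _ (by simp))
    refine tendsto_ofReal_nhdsGT_nhdsNE_zero.frequently
      ((hline.eventually h).mono fun r hr => ?_).frequently
    simp only [heatKernel_add_smul_sub hτ, Complex.ofReal_mul] at hr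
    simp only [mul_assoc, integral_const_mul] at hr
    rw [weightedMGF, ← (mul_eq_zero.mp hr).resolve_left (by simp)]
    congr 1 with z
    push_cast
    ring
  have hzero : g y = 0 := eq_zero_of_forall_integral_mul_cexp_dotProduct
    ((hg 0).integrable zero_le_one)
    (fun ξ => (hg ξ).weightedMGF_eq_zero_of_frequently (hmgf ξ) (by simp))
    (((Complex.continuous_ofReal.comp (continuous_heatKernel n τ)).comp
      (continuous_const.sub continuous_id)).continuousAt.mul hy)
  refine (mul_eq_zero.mp hzero).resolve_left (Complex.ofReal_ne_zero.mpr (ne_of_gt ?_))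
  unfold heatKernel
  positivity

lemma HasExpDecay.eq_zero_of_eventually_heatAverage_eq_zero {T δ : ℝ} {v : SpaceTime n → ℂ}
    (hδ : 0 ≤ δ) (h : HasExpDecay n T δ v) (hτ : 0 < τ) {p : SpaceTime n} (hp : p.2 - τ < T)
    (hzero : ∀ᶠ x in 𝓝 p.1, heatAverage n v τ (x, p.2) = 0) (x : Fin n → ℝ) :
    v (x, p.2 - τ) = 0 := by
  obtain ⟨M, -, hM⟩ := h.exists_norm_le_const hδ hp
  have hcont : Continuous fun y => v (y, p.2 - τ) :=
    h.contDiffOn.continuousOn.comp_continuous (by fun_prop) fun _ => hp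
  refine eq_zero_of_eventually_integral_heatKernel_mul_eq_zero hτ (f := fun y => v (y, p.2 - τ))
    hcont.aestronglyMeasurable (fun y => hM _ le_rfl) (hzero.mono fun z hz => ?_)
    hcont.continuousAt
  rwa [← heatSemigroup_eq_heatAverage v hτ] at hz

end HeatUniqueness

section Entanglement

open Topology

lemma one_div_Gamma_neg_add_natCast {x : ℝ} (hx : 0 ≤ x) (i : ℕ) :
    1 / Real.Gamma (-(x + i)) =
      (-1) ^ i * (Real.sin (-(π * x)) / π * Real.Gamma (1 + (x + i))) := by
  have hGamma : Real.Gamma (1 + (x + i)) ≠ 0 := (Real.Gamma_pos_of_pos (by positivity)).ne'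
  have hsin : Real.sin (π * -(x + i)) = (-1) ^ i * Real.sin (-(π * x)) := by
    rw [← Real.sin_sub_nat_mul_pi]
    ring_nf
  have hrefl := Real.Gamma_mul_Gamma_one_sub (-(x + i))
  rw [sub_neg_eq_add, hsin] at hrefl
  rw [eq_div_of_mul_eq hGamma hrefl]
  simp only [div_eq_mul_inv, mul_inv, inv_inv]
  ring

lemma sin_neg_pi_mul_ne_zero {x : ℝ} (hx : 0 ≤ x) (hnotnat : ∀ m : ℕ, x ≠ m) :
    Real.sin (-(π * x)) ≠ 0 := by
  rw [Real.sin_neg, neg_ne_zero, Real.sin_ne_zero_iff]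
  intro m hm
  have hxm : x = m := mul_left_cancel₀ Real.pi_ne_zero (by linarith)
  lift m to ℕ using by exact_mod_cast hxm ▸ hx
  exact hnotnat m (by exact_mod_cast hxm)

variable {n : ℕ} {T δ : ℝ} {U : Set (SpaceTime n)} {ι : Type*} [Fintype ι] {α : ι → ℝ}
  {b : ι → ℂ} {u : ι → SpaceTime n → ℂ}

lemma heatAverage_eq_zero_of_sum_fracHeatPoly_eq_zero (hδ : 0 < δ) (hU : IsOpen U)
    (hUT : U ⊆ pastOf n T) (hu : ∀ k, HasExpDecayZeroOn n T δ U (u k)) (hα : ∀ k, 0 ≤ α k)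
    (hnotnat : ∀ k, ∀ m : ℕ, α k ≠ m) (hnonres : ∀ j k, j ≠ k → ∀ m : ℤ, α k - α j ≠ m)
    (hb : ∀ k, b k ≠ 0) (hsum : ∀ p ∈ U, ∑ k, b k * fracHeatPoly n (α k) (u k) p = 0) (k : ι)
    {p : SpaceTime n} (hp : p ∈ U) {τ : ℝ} (hτ : 0 < τ) : heatAverage n (u k) τ p = 0 := by
  obtain ⟨c, V, hV, hdecay⟩ := HasExpDecayZeroOn.exists_forall_flatExpDecay n hδ hU hUT hp
  choose C hC using fun k => hdecay (u k) (hu k)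
  have hrel (i : ℕ) : ∑ k, b k * heatPower n (α k + i) (u k) p = 0 := by
    refine sum_heatPower_add_natCast_eq_zero hδ hU hUT hu (fun q hq => ?_) i p hp
    simp only [← (hu _).fracHeatPoly_eq_heatPower hδ hU hUT hq (hα _), hsum q hq]
  refine FlatExpDecay.eq_zero_of_forall_sum_negMoment_eq_zero
    (d := fun k => b k * (Real.sin (-(π * α k)) / π : ℝ))
    (fun k => hC k p (mem_of_mem_nhds hV)) hα hnonres
    (fun k => mul_ne_zero (hb k) (Complex.ofReal_ne_zero.mpr
      (div_ne_zero (sin_neg_pi_mul_ne_zero (hα k) (hnotnat k)) Real.pi_ne_zero)))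
    (fun i => ?_) k hτ
  refine (mul_eq_zero.mp ?_).resolve_left (pow_ne_zero i (neg_ne_zero.mpr (one_ne_zero (α := ℂ))))
  rw [← hrel i, Finset.mul_sum]
  refine Finset.sum_congr rfl fun k _ => ?_
  have hGamma := congrArg ((↑) : ℝ → ℂ) (one_div_Gamma_neg_add_natCast (hα k) i)
  push_cast at hGamma ⊢
  rw [heatPower, hGamma]
  ring

lemma HasExpDecay.of_smoothSchwartzUpTo_of_schwartzMap {v : SpaceTime n → ℂ} (hδ : 0 ≤ δ)
    (hv : SmoothSchwartzUpTo n T v)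
    (hdecay : ∀ (β₀ : ℕ) (β : Fin n → ℕ), ∃ (C : ℝ) (φ : SchwartzMap (Fin n → ℝ) ℝ),
      ∀ p : SpaceTime n, p.2 ≤ -T → ‖Dmixed n β₀ β v p‖ ≤ C * |φ p.1| * rexp (δ * p.2)) :
    HasExpDecay n T δ v := by
  refine .of_smoothSchwartzUpTo hδ hv fun β₀ β => ?_
  obtain ⟨C, φ, hC⟩ := hdecay β₀ β
  obtain ⟨M, hM⟩ := φ.decay 0 0
  refine ⟨|C| * M, fun p hp => (hC p hp).trans ?_⟩
  have hφ : |φ p.1| ≤ M := by simpa using hM.2 p.1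
  gcongr
  exact le_abs_self C

theorem entanglement_principle_general (hδ : 0 < δ) (hU : IsOpen U) (hUT : U ⊆ pastOf n T)
    (hα : ∀ k, 0 ≤ α k) (hnotnat : ∀ k, ∀ m : ℕ, α k ≠ m)
    (hnonres : ∀ j k, j ≠ k → ∀ m : ℤ, α k - α j ≠ m) (hb : ∀ k, b k ≠ 0)
    (hu : ∀ k, HasExpDecayZeroOn n T δ U (u k))
    (hsum : ∀ p ∈ U, ∑ k, b k * fracHeatPoly n (α k) (u k) p = 0) (k : ι)
    {p : SpaceTime n} (hp : p ∈ U) (x : Fin n → ℝ) {t : ℝ} (ht : t < p.2) : u k (x, t) = 0 := by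
  have hnhds : ∀ᶠ x in 𝓝 p.1, (x, p.2) ∈ U :=
    ContinuousAt.preimage_mem_nhds (by fun_prop) (hU.mem_nhds hp)
  have hpT : p.2 < T := hUT hp
  have hzero := (hu k).eq_zero_of_eventually_heatAverage_eq_zero hδ.le (sub_pos.mpr ht)
    (by linarith) (hnhds.mono fun y hy => heatAverage_eq_zero_of_sum_fracHeatPoly_eq_zero hδ hU hUT
      hu hα hnotnat hnonres hb hsum k hy (sub_pos.mpr ht)) x
  rwa [sub_sub_cancel] at hzero

end Entanglement

/-!
Theorem 1.2 of the paper (entanglement principle), in the Euclidean case `g = I`,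
with the nonresonance condition of Assumption 1.1.
-/

theorem entanglement_principle
    (n : ℕ) (hn : 2 ≤ n)
    (𝒪 : Set (Fin n → ℝ)) (h𝒪open : IsOpen 𝒪) (h𝒪ne : 𝒪.Nonempty)
    (N : ℕ) (hN : 1 ≤ N) (T : ℝ) (hT : 0 < T)
    (α : Fin N → ℝ) (hpos : ∀ k, 0 < α k) (hmono : StrictMono α)
    (hnotnat : ∀ k, ∀ m : ℕ, α k ≠ m)
    (hnonres : ∀ j k : Fin N, j ≠ k → ∀ m : ℤ, α k - α j ≠ m)
    (b : Fin N → ℂ) (hb : ∀ k, b k ≠ 0)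
    (u : Fin N → SpaceTime n → ℂ)
    (hreg : ∀ k, SmoothSchwartzUpTo n T (u k))
    (δ : ℝ) (hδ : 0 < δ)
    -- decay: `|D^β u_k(x,t)| ≤ C_β |φ_β(x)| e^{δ t}` for `t ≤ -T`, all `β`, all `k`
    (hdecay : ∀ (β0 : ℕ) (β : Fin n → ℕ),
      ∃ C : ℝ, 0 < C ∧ ∃ φ : SchwartzMap (Fin n → ℝ) ℝ,
        ∀ k, ∀ (x : Fin n → ℝ) (t : ℝ), t ≤ -T →
          ‖Dmixed n β0 β (u k) (x, t)‖ ≤ C * |φ x| * Real.exp (δ * t))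
    -- each `u_k` vanishes on `𝒪 × (-T,T)`
    (hvanish : ∀ k, ∀ x ∈ 𝒪, ∀ t ∈ Ioo (-T) T, u k (x, t) = 0)
    -- `∑ₖ b_k 𝓗^{α_k} u_k = 0` on `𝒪 × (-T,T)`
    (hsum : ∀ x ∈ 𝒪, ∀ t ∈ Ioo (-T) T,
      ∑ k, b k * fracHeatPoly n (α k) (u k) (x, t) = 0) :
    ∀ k, ∀ x : Fin n → ℝ, ∀ t ∈ Ioo (-T) T, u k (x, t) = 0 := by
  obtain ⟨x₀, hx₀⟩ := h𝒪ne
  intro k x t ht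
  obtain ⟨t₀, htt₀, ht₀T⟩ := exists_between ht.2
  exact entanglement_principle_general (U := 𝒪 ×ˢ Ioo (-T) T) (p := (x₀, t₀)) hδ
    (h𝒪open.prod isOpen_Ioo) (fun q hq => hq.2.2) (fun k => (hpos k).le) hnotnat hnonres hb
    (fun k => ⟨.of_smoothSchwartzUpTo_of_schwartzMap hδ.le (hreg k) fun β₀ β =>
        let ⟨C, _, φ, h⟩ := hdecay β₀ β
        ⟨C, φ, fun p => h k p.1 p.2⟩,
      fun q hq => hvanish k q.1 hq.1 q.2 hq.2⟩)
    (fun q hq => hsum q.1 hq.1 q.2 hq.2) k ⟨hx₀, ht.1.trans htt₀, ht₀T⟩ x htt₀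

end
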